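/- Let h(x,y) = ax² + bxy + cy² ∈ ℤ[x,y] be a binary quadratic form with b² − 4ac ≠ 0. Then there is a constant c(h) > 0 such that for all N, any A ⊆ {1,...,N} with a − a' ≠ h(m,n) for all distinct a, a' ∈ A and all positive integers m, n satisfies |A| ≤ C(h)·N·exp(−c(h)·√(log N)). -/

import Mathlib

open Finset

/-!
The proof is a density increment along progressions of square step. Write
`h(m, n) = a m² + b m n + c n²`, let `A ⊆ [1, N]` have density `δ` and no two distinct elements
differing by a value of `h`, and let `f = 1_A - δ 1_[1, N]`. Unless `A` is concentrated near an end
of `[1, N]`, which is itself a density increment, the average of `∑ₓ f(x) f(x + h(m, n))` over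
`1 ≤ m, n ≤ M`, with `M` a small multiple of `√N`, is at most `-δ² N / 4`.

By Parseval's identity this average is `∫ |f̂|² S`, with `S` the two-dimensional quadratic
exponential sum of `h`. Differencing in both variables bounds `|S|²` by
`∑_w V(ℓ₁(w)) V(ℓ₂(w))`, where `V(k)` bounds the geometric sums of ratio `ω ^ k` and `ℓ₁, ℓ₂` are
the linear forms attached to the polarisation of `h`. As `b² - 4 a c ≠ 0`, the map `(ℓ₁, ℓ₂)` is
injective, so this is at most `(∑_k V(k))²`: unlike in the one-variable case, the square root costs
nothing (`norm_weyl_le`). Counting the recurrence times of `ω` gives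
`|S| = O(M² / K) · (1 + #{k ≤ K : ‖ω ^ k² - 1‖ ≤ 12 K⁵ / M²})` (`weyl_le`). Frequencies with
`ω ^ k²` close to `1` survive averaging over progressions of step `k²`, so with `K` a large multiple
of `1 / δ` one obtains a `k ≤ K` for which the averages of `f` along progressions of step `k²` and
length `≈ M² / K⁵` have mean square `≫ δ²` (`exists_large_energy`). The sum over `k` matches the
saving `1 / K` exactly, so no power of `δ` is lost.

Therefore `A` has density at least `(1 + κ) δ`, with `κ > 0` depending only on `h`, on one such
progression (`exists_increment`). Since `h(k m, k n) = k² h(m, n)`, the trace of `A` on it, rescaled,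
again avoids the values of `h`. Each step divides `N` by at most a power of `1 / δ`, and there are
`O(log (1 / δ))` steps, so `log N = O(log (1 / δ)²)` (`log_le_of_formFree`), which is the claimed
bound.
-/

namespace BinQuad

/-! ### Recurrence times and quadratic exponential sums -/

theorem norm_zpow_one {ω : ℂ} (hω : ‖ω‖ = 1) (k : ℤ) : ‖ω ^ k‖ = 1 := by
  rw [norm_zpow, hω, one_zpow]

theorem ne_zero_of_unit {ω : ℂ} (hω : ‖ω‖ = 1) : ω ≠ 0 := by
  intro h; simp [h] at hω

theorem geom_sum_mul_sub {ω : ℂ} (hω : ‖ω‖ = 1) (u : ℤ) (n : ℕ) :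
    (∑ x ∈ Ico u (u + n), ω ^ x) * (ω - 1) = ω ^ (u + n) - ω ^ u := by
  have h0 := ne_zero_of_unit hω
  induction n with
  | zero => simp
  | succ n ih =>
    have : Ico u (u + (n + 1 : ℕ)) = insert (u + n) (Ico u (u + n)) := by
      ext x; simp only [mem_Ico, mem_insert]; push_cast; omega
    rw [this, sum_insert (by simp), add_mul, ih]
    have : ω ^ (u + (n + 1 : ℕ)) = ω ^ (u + n) * ω := by
      rw [← zpow_add_one₀ h0]; push_cast; ring_nf
    rw [this]; ring

theorem norm_geom_sum_le {ω : ℂ} (hω : ‖ω‖ = 1) (h1 : ω ≠ 1) (u v : ℤ) :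
    ‖∑ x ∈ Icc u v, ω ^ x‖ ≤ 2 / ‖ω - 1‖ := by
  have hpos : 0 < ‖ω - 1‖ := norm_pos_iff.2 (sub_ne_zero.2 h1)
  rcases le_or_gt u (v + 1) with h | h
  · obtain ⟨n, hn⟩ := Int.le.dest h
    have : Icc u v = Ico u (u + n) := by
      ext x; simp only [mem_Icc, mem_Ico]; omega
    rw [le_div_iff₀ hpos, this, ← norm_mul, geom_sum_mul_sub hω]
    refine (norm_sub_le _ _).trans ?_
    rw [norm_zpow_one hω, norm_zpow_one hω]; norm_num
  · rw [Icc_eq_empty (by omega)]; simp; positivity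

theorem norm_pow_sub_one_le {ζ : ℂ} (hζ : ‖ζ‖ = 1) (i : ℕ) :
    ‖ζ ^ i - 1‖ ≤ i * ‖ζ - 1‖ := by
  induction i with
  | zero => simp
  | succ n ih =>
    have : ζ ^ (n + 1) - 1 = ζ ^ n * (ζ - 1) + (ζ ^ n - 1) := by ring
    rw [this]
    refine (norm_add_le _ _).trans ?_
    rw [norm_mul, norm_pow, hζ, one_pow]; push_cast; linarith

/-- Powers of a unit complex number near `1` move away from `1` linearly, until they have
travelled a bounded distance. -/
theorem le_norm_pow_sub_one {ζ : ℂ} (hζ : ‖ζ‖ = 1) (i : ℕ) (hi : i * ‖ζ - 1‖ ≤ 1 / 2) :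
    i * ‖ζ - 1‖ / 2 ≤ ‖ζ ^ i - 1‖ := by
  have h1 : ζ ^ i - 1 = (∑ s ∈ range i, ζ ^ s) * (ζ - 1) := (geom_sum_mul ζ i).symm
  have h2 : (i : ℂ) = ∑ s ∈ range i, ζ ^ s - ∑ s ∈ range i, (ζ ^ s - 1) := by
    rw [sum_sub_distrib]; simp
  have h3 : ‖∑ s ∈ range i, (ζ ^ s - 1)‖ ≤ i / 2 := by
    refine (norm_sum_le _ _).trans ?_
    calc ∑ s ∈ range i, ‖ζ ^ s - 1‖ ≤ ∑ s ∈ range i, (1 / 2 : ℝ) := by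
          refine sum_le_sum fun s hs => (norm_pow_sub_one_le hζ s).trans (le_trans ?_ hi)
          have : s ≤ i := (mem_range.1 hs).le
          gcongr
      _ = i / 2 := by simp; ring
  have h4 : (i : ℝ) ≤ ‖∑ s ∈ range i, ζ ^ s‖ + i / 2 := by
    have : ‖(i : ℂ)‖ = i := by simp
    rw [← this]; nth_rewrite 1 [h2]
    refine (norm_sub_le _ _).trans ?_
    rw [this]; gcongr
  rw [h1, norm_mul]
  nlinarith [norm_nonneg (ζ - 1)]

/-- If the translates of `G` by `0, s, …, (t - 1) s` are pairwise disjoint, then `G` has at most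
about `1 / t` of the size of an interval containing them all. -/
theorem card_mul_le_of_translates (G : Finset ℤ) (X : ℤ) (hX : 0 ≤ X) (hG : G ⊆ Icc (-X) X)
    (s t : ℕ) (h : ∀ u : ℕ, 1 ≤ u → u < t → ∀ g ∈ G, g + s * u ∉ G) :
    (t : ℤ) * G.card ≤ 2 * X + 1 + s * t := by
  have key : (range t ×ˢ G).card ≤ (Icc (-X) (X + s * t)).card := by
    refine card_le_card_of_injOn (fun p => p.2 + s * p.1) ?_ ?_
    · rintro ⟨u, g⟩ hp
      simp only [coe_product, Set.mem_prod, mem_coe, mem_range] at hp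
      have := mem_Icc.1 (hG hp.2)
      have h1 : (s : ℤ) * u ≤ s * t := by
        have : (u : ℤ) ≤ t := by exact_mod_cast hp.1.le
        gcongr
      have h2 : (0 : ℤ) ≤ s * u := by positivity
      simp only [mem_coe, mem_Icc]; constructor <;> linarith
    · rintro ⟨u, g⟩ hp ⟨u', g'⟩ hp' heq
      simp only [coe_product, Set.mem_prod, mem_coe, mem_range] at hp hp' heq
      rcases lt_trichotomy u u' with hlt | rfl | hlt
      · exfalso
        apply h (u' - u) (by omega) (by omega) g' hp'.2
        have : g' + s * ((u' - u : ℕ) : ℤ) = g := by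
          rw [Nat.cast_sub hlt.le]; linarith
        rw [this]; exact hp.2
      · simp at heq; simp [heq]
      · exfalso
        apply h (u - u') (by omega) (by omega) g hp.2
        have : g + s * ((u - u' : ℕ) : ℤ) = g' := by
          rw [Nat.cast_sub hlt.le]; linarith
        rw [this]; exact hp'.2
  rw [card_product, card_range, Int.card_Icc] at key
  have h0 : (0 : ℤ) ≤ s * t := by positivity
  zify at key
  rw [Int.toNat_of_nonneg (by linarith)] at key
  linarith

theorem norm_zpow_diff {ω : ℂ} (hω : ‖ω‖ = 1) (g : ℤ) (v : ℕ) {η : ℝ}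
    (h1 : ‖ω ^ g - 1‖ ≤ η) (h2 : ‖ω ^ (g + v) - 1‖ ≤ η) : ‖ω ^ v - 1‖ ≤ 2 * η := by
  have : ω ^ g * (ω ^ v - 1) = (ω ^ (g + v) - 1) - (ω ^ g - 1) := by
    rw [zpow_add₀ (ne_zero_of_unit hω), zpow_natCast]; ring
  have h3 : ‖ω ^ v - 1‖ = ‖ω ^ g * (ω ^ v - 1)‖ := by
    rw [norm_mul, norm_zpow_one hω, one_mul]
  rw [h3, this]
  refine (norm_sub_le _ _).trans ?_
  linarith

set_option maxHeartbeats 1000000 in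
/-- The number of recurrence times `|k| ≤ H M` of `ω` at scale `K / M` is an `O(1 / K)` proportion
of the whole range, multiplied by one plus the number of `k ≤ K` such that `ω ^ k²` is extremely
close to `1`. -/
theorem card_return_le {ω : ℂ} (hω : ‖ω‖ = 1) (H M K : ℕ) (hH : 1 ≤ H) (hK : 1 ≤ K)
    (hM : 24 * K ^ 2 ≤ M) :
    ((Icc (-(H * M : ℤ)) (H * M)).filter
        (fun k : ℤ => ‖ω ^ k - 1‖ ≤ 2 * K / M)).card * (K : ℝ) ≤
      8 * H * M * (1 + ((Icc 1 K).filter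
        (fun k : ℕ => ‖ω ^ (k ^ 2) - 1‖ ≤ 12 * K ^ 5 / M ^ 2)).card) := by
  set η : ℝ := 2 * K / M with hη
  set ρ : ℝ := 12 * K ^ 3 / M ^ 2 with hρ
  set G := (Icc (-(H * M : ℤ)) (H * M)).filter (fun k : ℤ => ‖ω ^ k - 1‖ ≤ η) with hG
  set R := (Icc 1 K).filter (fun k : ℕ => ‖ω ^ (k ^ 2) - 1‖ ≤ 12 * K ^ 5 / M ^ 2) with hR
  have hK0 : (1 : ℝ) ≤ K := by exact_mod_cast hK
  have hKM : K ≤ M := by nlinarith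
  have hM1 : 1 ≤ M := hK.trans hKM
  have hM0 : (1 : ℝ) ≤ M := by exact_mod_cast hM1
  have hKM' : (K : ℝ) ≤ M := by exact_mod_cast hKM
  have hMr : 24 * (K : ℝ) ^ 2 ≤ M := by exact_mod_cast hM
  have hHr : (1 : ℝ) ≤ H := by exact_mod_cast hH
  have hηpos : 0 < η := by positivity
  have hGsub : G ⊆ Icc (-(H * M : ℤ)) (H * M) := filter_subset _ _
  have hGmem : ∀ g ∈ G, ‖ω ^ g - 1‖ ≤ η := fun g hg => (mem_filter.1 hg).2
  have hHM : (M : ℝ) ≤ H * M := by nlinarith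
  have hRHS : 8 * (H : ℝ) * M ≤ 8 * H * M * (1 + R.card) := by
    have : (0 : ℝ) ≤ 8 * H * M * R.card := by positivity
    linarith
  -- if the translates of `G` by `s, 2 s, …` are disjoint, then `G` is sparse
  have tr : ∀ s t : ℕ, (∀ u : ℕ, 1 ≤ u → u < t → 2 * η < ‖ω ^ (s * u) - 1‖) →
      (t : ℝ) * G.card ≤ 2 * (H * M) + 1 + s * t := by
    intro s t hst
    have := card_mul_le_of_translates G (H * M) (by positivity) hGsub s t (by
      intro u hu hut g hg hg'
      have h1 := hst u hu hut
      have h2 := norm_zpow_diff hω g (s * u) (hGmem g hg) (by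
        have := hGmem _ hg'
        push_cast; exact this)
      linarith)
    exact_mod_cast this
  by_cases hex : ∃ q : ℕ, 1 ≤ q ∧ ‖ω ^ q - 1‖ ≤ 2 * η
  swap
  · push Not at hex
    have := tr 1 K (fun u hu _ => by rw [one_mul]; exact hex u hu)
    push_cast at this
    nlinarith
  -- `q` is the first return time: the translates of `G` by `1, …, q - 1` are disjoint from `G`
  classical
  set q := Nat.find hex with hq
  obtain ⟨hq1, hq2⟩ := Nat.find_spec hex
  have hqmin : ∀ u : ℕ, 1 ≤ u → u < q → 2 * η < ‖ω ^ u - 1‖ := by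
    intro u hu huq
    by_contra hcon
    exact Nat.find_min hex huq ⟨hu, not_lt.1 hcon⟩
  rcases lt_or_ge K q with hKq | hqK
  · have := tr 1 K (fun u hu huK => by rw [one_mul]; exact hqmin u hu (huK.trans hKq))
    push_cast at this
    nlinarith
  have hq1r : (1 : ℝ) ≤ q := by exact_mod_cast hq1
  have hqKr : (q : ℝ) ≤ K := by exact_mod_cast hqK
  -- If `ω ^ q` is very close to `1`, all the multiples of `q` up to `K` belong to `R`, and the
  -- bound `|G| = O(H M / q)` is good enough. Otherwise the powers of `ω ^ q` move away from `1` fast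
  -- enough for `K` translates of `G` by multiples of some `q s ≤ M / K` to be disjoint.
  rcases le_or_gt ‖ω ^ q - 1‖ ρ with hγ | hγ
  · have h1 := tr 1 q (fun u hu huq => by rw [one_mul]; exact hqmin u hu huq)
    have h2 : K / q ≤ R.card := by
      have : ((Icc 1 (K / q)).image (fun j => q * j)) ⊆ R := by
        intro k hk
        obtain ⟨j, hj, rfl⟩ := mem_image.1 hk
        rw [mem_Icc] at hj
        have hjK : q * j ≤ K := (Nat.mul_le_mul_left q hj.2).trans (Nat.mul_div_le K q)
        rw [hR, mem_filter, mem_Icc]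
        refine ⟨⟨Nat.mul_pos hq1 hj.1, hjK⟩, ?_⟩
        have e : (q * j) ^ 2 = q * (q * j * j) := by ring
        rw [e, pow_mul]
        refine (norm_pow_sub_one_le (by rw [norm_pow, hω, one_pow]) _).trans ?_
        have h3 : q * j * j ≤ K * K := by
          refine Nat.mul_le_mul hjK (le_trans ?_ hjK)
          nlinarith
        have h3r : ((q * j * j : ℕ) : ℝ) ≤ K * K := by exact_mod_cast h3
        calc ((q * j * j : ℕ) : ℝ) * ‖ω ^ q - 1‖ ≤ (K * K) * ρ := by
              gcongr
          _ = 12 * K ^ 5 / M ^ 2 := by rw [hρ]; ring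
      have h4 := card_le_card this
      rw [card_image_of_injective _ (fun x y hxy => Nat.eq_of_mul_eq_mul_left hq1 hxy),
        Nat.card_Icc] at h4
      simpa using h4
    have h3 : K ≤ 2 * (q * R.card) := by
      have e1 : 1 ≤ K / q := Nat.div_pos hqK hq1
      have e2 : K < q * (K / q + 1) := Nat.lt_mul_div_succ K hq1
      have e3 : q * (K / q) ≤ q * R.card := Nat.mul_le_mul_left q h2
      nlinarith
    have h3r : (K : ℝ) ≤ 2 * (q * R.card) := by exact_mod_cast h3
    push_cast at h1
    have h5 : (q : ℝ) * G.card ≤ 4 * (H * M) := by nlinarith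
    calc (G.card : ℝ) * K ≤ G.card * (2 * (q * R.card)) := by gcongr
      _ = 2 * R.card * (q * G.card) := by ring
      _ ≤ 2 * R.card * (4 * (H * M)) := by gcongr
      _ ≤ 8 * H * M * (1 + R.card) := by
        have : (0 : ℝ) ≤ 8 * H * M := by positivity
        nlinarith
  · have hρpos : 0 < ρ := by positivity
    have hγpos : 0 < ‖ω ^ q - 1‖ := hρpos.trans hγ
    set γ := ‖ω ^ q - 1‖ with hγd
    set s := ⌊4 * η / γ⌋₊ + 1 with hs
    have hs1 : 4 * η / γ < s := by rw [hs]; push_cast; exact Nat.lt_floor_add_one _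
    have hs2 : (s : ℝ) ≤ 6 * η / γ := by
      have e1 : (⌊4 * η / γ⌋₊ : ℝ) ≤ 4 * η / γ := Nat.floor_le (by positivity)
      have e2 : 1 ≤ 2 * η / γ := by rw [le_div_iff₀ hγpos]; linarith
      have e3 : 6 * η / γ = 4 * η / γ + 2 * η / γ := by ring
      rw [hs, e3]; push_cast; linarith
    rw [div_lt_iff₀ hγpos] at hs1
    have hs3 := hs2
    rw [le_div_iff₀ hγpos] at hs2
    have hKη : K * (6 * η) ≤ 1 / 2 := by
      rw [hη]
      have : K * (6 * (2 * (K : ℝ) / M)) = 12 * K ^ 2 / M := by ring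
      rw [this, div_le_iff₀ (by positivity)]; linarith
    have h1 := tr (q * s) K (by
      intro u hu huK
      have e : q * s * u = q * (s * u) := by ring
      have hu' : (1 : ℝ) ≤ u := by exact_mod_cast hu
      have huK' : (u : ℝ) ≤ K := by exact_mod_cast huK.le
      rw [e, pow_mul]
      have hsu : ((s * u : ℕ) : ℝ) * γ ≤ 1 / 2 := by
        push_cast
        calc (s : ℝ) * u * γ = u * (s * γ) := by ring
          _ ≤ K * (6 * η) := by gcongr
          _ ≤ 1 / 2 := hKη
      have h2 := le_norm_pow_sub_one (ζ := ω ^ q) (by rw [norm_pow, hω, one_pow]) (s * u) hsu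
      refine lt_of_lt_of_le ?_ h2
      rw [← hγd]; push_cast
      have : (s : ℝ) * γ ≤ s * u * γ := by
        have : 0 ≤ (s : ℝ) * γ := by positivity
        nlinarith
      linarith)
    have h2 : ((q * s : ℕ) : ℝ) * K ≤ M := by
      push_cast
      calc (q : ℝ) * s * K ≤ K * (6 * η / ρ) * K := by
            gcongr
            exact hs3.trans (by gcongr)
        _ = M := by
            rw [hη, hρ]
            field_simp
            norm_num
    nlinarith

/-- Reindexing a double sum over an interval by the difference of the two variables. -/
theorem sum_sum_eq_sum_diff (M : ℤ) (F : ℤ → ℤ → ℂ) :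
    ∑ m ∈ Icc 1 M, ∑ m' ∈ Icc 1 M, F m m' =
      ∑ w ∈ Icc (-M) M, ∑ m ∈ Icc (max 1 (1 - w)) (min M (M - w)), F m (m + w) := by
  rw [sum_sigma', sum_sigma']
  refine sum_nbij' (fun p => ⟨p.2 - p.1, p.1⟩) (fun p => ⟨p.2, p.2 + p.1⟩) ?_ ?_ ?_ ?_ ?_
  · rintro ⟨x, y⟩ h; simp only [mem_sigma, mem_Icc] at h ⊢; omega
  · rintro ⟨x, y⟩ h; simp only [mem_sigma, mem_Icc] at h ⊢; omega
  · rintro ⟨x, y⟩ h; simp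
  · rintro ⟨x, y⟩ h; simp
  · rintro ⟨x, y⟩ h; simp

/-- Van der Corput differencing in both variables. The differenced phase is linear in `m` and `n`
separately, with slopes the two linear forms `2 a w + b w'` and `b w + 2 c w'` in the shift
`(w, w')`. As these are linearly independent, `|S|²` is bounded by a product of two equal sums, so
taking the square root loses nothing. -/
theorem norm_weyl_le (a b c : ℤ) (hΔ : b ^ 2 - 4 * a * c ≠ 0) {ω : ℂ} (hω : ‖ω‖ = 1)
    (M : ℕ) (X : ℤ) (hX : 2 * (|a| + |b| + |c|) * M ≤ X) (V : ℤ → ℝ)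
    (hV : ∀ k u v : ℤ, 1 ≤ u → v ≤ M → ‖∑ x ∈ Icc u v, (ω ^ k) ^ x‖ ≤ V k) :
    ‖∑ m ∈ Icc 1 (M : ℤ), ∑ n ∈ Icc 1 (M : ℤ), ω ^ (a * m ^ 2 + b * m * n + c * n ^ 2)‖ ≤
      ∑ k ∈ Icc (-X) X, V k := by
  have h0 := ne_zero_of_unit hω
  have hV0 : ∀ k, 0 ≤ V k := fun k => (norm_nonneg _).trans (hV k 1 M le_rfl le_rfl)
  set S := ∑ m ∈ Icc 1 (M : ℤ), ∑ n ∈ Icc 1 (M : ℤ), ω ^ (a * m ^ 2 + b * m * n + c * n ^ 2)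
    with hS
  have hconj : ∀ k : ℤ, (starRingEnd ℂ) (ω ^ k) = ω ^ (-k) := by
    intro k
    rw [zpow_neg, Complex.inv_def, Complex.normSq_eq_norm_sq, norm_zpow_one hω]; simp
  let I : ℤ → Finset ℤ := fun w => Icc (max 1 (1 - w)) (min (M : ℤ) (M - w))
  have expand : S * (starRingEnd ℂ) S = ∑ w ∈ Icc (-(M : ℤ)) M, ∑ w' ∈ Icc (-(M : ℤ)) M,
      ω ^ (a * w ^ 2 + b * w * w' + c * w' ^ 2) *
        ((∑ m ∈ I w, (ω ^ (2 * a * w + b * w')) ^ m) *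
          (∑ n ∈ I w', (ω ^ (b * w + 2 * c * w')) ^ n)) := by
    calc S * (starRingEnd ℂ) S = ∑ m ∈ Icc 1 (M : ℤ), ∑ m' ∈ Icc 1 (M : ℤ),
          ∑ n ∈ Icc 1 (M : ℤ), ∑ n' ∈ Icc 1 (M : ℤ),
          ω ^ ((a * m' ^ 2 + b * m' * n' + c * n' ^ 2) - (a * m ^ 2 + b * m * n + c * n ^ 2)) := by
          rw [hS, map_sum, mul_comm, sum_mul_sum]
          refine sum_congr rfl fun m _ => sum_congr rfl fun m' _ => ?_
          rw [map_sum, sum_mul_sum]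
          refine sum_congr rfl fun n _ => sum_congr rfl fun n' _ => ?_
          rw [hconj, mul_comm, ← zpow_add₀ h0, sub_eq_add_neg]
      _ = ∑ w ∈ Icc (-(M : ℤ)) M, ∑ m ∈ I w, ∑ w' ∈ Icc (-(M : ℤ)) M, ∑ n ∈ I w',
          ω ^ ((a * (m + w) ^ 2 + b * (m + w) * (n + w') + c * (n + w') ^ 2) -
            (a * m ^ 2 + b * m * n + c * n ^ 2)) := by
          rw [sum_sum_eq_sum_diff]
          refine sum_congr rfl fun w _ => sum_congr rfl fun m _ => ?_
          rw [sum_sum_eq_sum_diff]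
      _ = _ := by
          refine sum_congr rfl fun w _ => ?_
          rw [sum_comm]
          refine sum_congr rfl fun w' _ => ?_
          rw [sum_mul_sum, mul_sum]
          refine sum_congr rfl fun m _ => ?_
          rw [mul_sum]
          refine sum_congr rfl fun n _ => ?_
          rw [← zpow_mul, ← zpow_mul, ← zpow_add₀ h0, ← zpow_add₀ h0]
          congr 1; ring
  have hsq : ‖S‖ ^ 2 ≤ (∑ k ∈ Icc (-X) X, V k) ^ 2 := by
    have e1 : ‖S‖ ^ 2 = ‖S * (starRingEnd ℂ) S‖ := by
      rw [norm_mul, RCLike.norm_conj, sq]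
    rw [e1, expand]
    calc _ ≤ ∑ w ∈ Icc (-(M : ℤ)) M, ∑ w' ∈ Icc (-(M : ℤ)) M,
          V (2 * a * w + b * w') * V (b * w + 2 * c * w') := by
          refine (norm_sum_le _ _).trans (sum_le_sum fun w _ => ?_)
          refine (norm_sum_le _ _).trans (sum_le_sum fun w' _ => ?_)
          rw [norm_mul, norm_mul, norm_zpow_one hω, one_mul]
          refine mul_le_mul (hV _ _ _ ?_ ?_) (hV _ _ _ ?_ ?_) (norm_nonneg _) (hV0 _) <;> simp
      _ = ∑ p ∈ Icc (-(M : ℤ)) M ×ˢ Icc (-(M : ℤ)) M,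
          V (2 * a * p.1 + b * p.2) * V (b * p.1 + 2 * c * p.2) := by rw [sum_product]
      _ = ∑ p ∈ (Icc (-(M : ℤ)) M ×ˢ Icc (-(M : ℤ)) M).image
            (fun p : ℤ × ℤ => (2 * a * p.1 + b * p.2, b * p.1 + 2 * c * p.2)), V p.1 * V p.2 := by
          rw [sum_image]
          rintro ⟨w, w'⟩ - ⟨y, y'⟩ - h
          simp only [Prod.mk.injEq] at h
          obtain ⟨h1, h2⟩ := h
          -- Cramer's rule with the nonzero determinant of the polar form
          have d1 : (b ^ 2 - 4 * a * c) * (w - y) = 0 := by linear_combination b * h2 - 2 * c * h1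
          have d2 : (b ^ 2 - 4 * a * c) * (w' - y') = 0 := by
            linear_combination b * h1 - 2 * a * h2
          have e1 := (mul_eq_zero.1 d1).resolve_left hΔ
          have e2 := (mul_eq_zero.1 d2).resolve_left hΔ
          simp only [Prod.mk.injEq]
          exact ⟨by linarith, by linarith⟩
      _ ≤ ∑ p ∈ Icc (-X) X ×ˢ Icc (-X) X, V p.1 * V p.2 := by
          refine sum_le_sum_of_subset_of_nonneg ?_ fun p _ _ => mul_nonneg (hV0 _) (hV0 _)
          intro p hp
          obtain ⟨⟨w, w'⟩, hw, rfl⟩ := mem_image.1 hp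
          simp only [mem_product, mem_Icc] at hw
          have hw1 : |w| ≤ M := abs_le.2 hw.1
          have hw2 : |w'| ≤ M := abs_le.2 hw.2
          have ha := mul_le_mul_of_nonneg_left hw1 (abs_nonneg a)
          have hb := mul_le_mul_of_nonneg_left hw2 (abs_nonneg b)
          have hb' := mul_le_mul_of_nonneg_left hw1 (abs_nonneg b)
          have hc := mul_le_mul_of_nonneg_left hw2 (abs_nonneg c)
          rw [← abs_mul] at ha hb hb' hc
          have pa : 0 ≤ |a| * M := by positivity
          have pb : 0 ≤ |b| * M := by positivity
          have pc : 0 ≤ |c| * M := by positivity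
          have := abs_le.1 ha
          have := abs_le.1 hb
          have := abs_le.1 hb'
          have := abs_le.1 hc
          simp only [mem_product, mem_Icc]
          refine ⟨⟨?_, ?_⟩, ?_, ?_⟩ <;> linarith
      _ = (∑ k ∈ Icc (-X) X, V k) ^ 2 := by rw [sum_product, sq, sum_mul_sum]
  exact abs_le_of_sq_le_sq' hsq (sum_nonneg fun k _ => hV0 k) |>.2

/-- The two-dimensional quadratic exponential sum saves a factor `K` over the trivial bound, up to
the number of `k ≤ K` for which `ω ^ k²` is within `O(K⁵ / M²)` of `1`, that is for which the
frequency is close to a rational with denominator `k²`. -/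
theorem weyl_le (a b c : ℤ) (hΔ : b ^ 2 - 4 * a * c ≠ 0) {ω : ℂ} (hω : ‖ω‖ = 1)
    (H M K : ℕ) (hH : 2 * (|a| + |b| + |c|) ≤ H) (hH1 : 1 ≤ H) (hK : 1 ≤ K)
    (hM : 24 * K ^ 2 ≤ M) :
    ‖∑ m ∈ Icc 1 (M : ℤ), ∑ n ∈ Icc 1 (M : ℤ), ω ^ (a * m ^ 2 + b * m * n + c * n ^ 2)‖ ≤
      11 * H * M ^ 2 / K * (1 + ((Icc 1 K).filter
        (fun k : ℕ => ‖ω ^ (k ^ 2) - 1‖ ≤ 12 * K ^ 5 / M ^ 2)).card) := by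
  have hK0 : (1 : ℝ) ≤ K := by exact_mod_cast hK
  have hKM : K ≤ M := by nlinarith
  have hM0 : (1 : ℝ) ≤ M := by exact_mod_cast hK.trans hKM
  have hHr : (1 : ℝ) ≤ H := by exact_mod_cast hH1
  have hHM : (1 : ℝ) ≤ H * M := by nlinarith
  have h1 := card_return_le hω H M K hH1 hK hM
  set R := (Icc 1 K).filter (fun k : ℕ => ‖ω ^ (k ^ 2) - 1‖ ≤ 12 * K ^ 5 / M ^ 2)
  set η : ℝ := 2 * K / M with hη
  have hηpos : 0 < η := by positivity
  set G := (Icc (-(H * M : ℤ)) (H * M)).filter (fun k : ℤ => ‖ω ^ k - 1‖ ≤ η) with hG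
  have h2 := norm_weyl_le a b c hΔ hω M (H * M) (by gcongr)
    (fun k => M / K + if ‖ω ^ k - 1‖ ≤ η then (M : ℝ) else 0) (by
      intro k u v hu hv
      by_cases hk : ‖ω ^ k - 1‖ ≤ η
      · rw [if_pos hk]
        refine (norm_sum_le _ _).trans ?_
        simp only [norm_zpow_one (norm_zpow_one hω k), sum_const, Int.card_Icc, nsmul_eq_mul,
          mul_one]
        have : (v + 1 - u).toNat ≤ M := by omega
        have : (((v + 1 - u).toNat : ℕ) : ℝ) ≤ M := by exact_mod_cast this
        have : (0 : ℝ) ≤ M / K := by positivity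
        linarith
      · rw [if_neg hk, add_zero]
        rw [not_le] at hk
        refine (norm_geom_sum_le (norm_zpow_one hω k) ?_ u v).trans ?_
        · intro h; rw [h, sub_self, norm_zero] at hk; linarith
        · calc 2 / ‖ω ^ k - 1‖ ≤ 2 / η := by gcongr
            _ = M / K := by rw [hη]; field_simp)
  refine h2.trans ?_
  rw [sum_add_distrib, ← sum_filter, sum_const, sum_const, Int.card_Icc, ← hG, nsmul_eq_mul,
    nsmul_eq_mul]
  have h3 : (((H * M + 1 - -(H * M : ℤ)).toNat : ℕ) : ℝ) = 2 * (H * M) + 1 := by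
    have : (H * M + 1 - -(H * M : ℤ)).toNat = 2 * (H * M) + 1 := by
      zify
      have : (0 : ℤ) ≤ H * M := by positivity
      rw [Int.toNat_of_nonneg (by linarith)]; ring
    rw [this]; push_cast; ring
  rw [h3]
  have h4 : (G.card : ℝ) ≤ 8 * H * M * (1 + R.card) / K := by
    rw [le_div_iff₀ (by positivity)]; exact h1
  have h5 : (2 * ((H : ℝ) * M) + 1) * (M / K) ≤ 3 * (H * M) * (M / K) := by gcongr; linarith
  have h6 : (G.card : ℝ) * M ≤ 8 * H * M * (1 + R.card) / K * M := by gcongr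
  have h7 : 3 * ((H : ℝ) * M) * (M / K) ≤ 3 * (H * M) * (M / K) * (1 + R.card) := by
    have : (0 : ℝ) ≤ 3 * (H * M) * (M / K) * R.card := by positivity
    linarith
  calc _ ≤ 3 * ((H : ℝ) * M) * (M / K) * (1 + R.card) + 8 * H * M * (1 + R.card) / K * M := by
        linarith
    _ = _ := by ring

/-! ### Parseval's identity and averages along progressions -/

/-- The exponential sum `∑ₓ g(x) ωˣ` over the window `W`; for `ω = exp (2 π i α)` this is the
Fourier transform of `g` at the frequency `-α`. -/
noncomputable def expSum (W : Finset ℤ) (g : ℤ → ℝ) (ω : ℂ) : ℂ := ∑ x ∈ W, (g x : ℂ) * ω ^ x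

/-- The average of `g` along the progression of length `L` and step `d` starting at `x`. -/
noncomputable def progAvg (d L : ℕ) (g : ℤ → ℝ) (x : ℤ) : ℝ :=
  (∑ j ∈ range L, g (x + j * d)) / L

/-- The primitive `p`-th root of unity `exp (2 π i / p)`. -/
noncomputable def root (p : ℕ) : ℂ := Complex.exp (2 * Real.pi * Complex.I / p)

theorem norm_root_pow (p t : ℕ) (hp : p ≠ 0) : ‖root p ^ t‖ = 1 := by
  have : IsPrimitiveRoot (root p) p := Complex.isPrimitiveRoot_exp p hp
  rw [norm_pow, this.norm'_eq_one hp, one_pow]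

theorem sum_root_zpow (p : ℕ) (hp : p ≠ 0) (n : ℤ) :
    ∑ t ∈ range p, (root p ^ t) ^ n = if (p : ℤ) ∣ n then (p : ℂ) else 0 := by
  have hprim : IsPrimitiveRoot (root p) p := Complex.isPrimitiveRoot_exp p hp
  have e : ∀ t : ℕ, (root p ^ t) ^ n = (root p ^ n) ^ t := by
    intro t
    rw [← zpow_natCast, ← zpow_natCast, ← zpow_mul, ← zpow_mul, mul_comm]
  simp_rw [e]
  split_ifs with h
  · rw [(hprim.zpow_eq_one_iff_dvd n).2 h]; simp
  · have h1 : root p ^ n ≠ 1 := fun h1 => h ((hprim.zpow_eq_one_iff_dvd n).1 h1)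
    have h2 := mul_geom_sum (root p ^ n) p
    rw [← e p, hprim.pow_eq_one, one_zpow, sub_self] at h2
    exact (mul_eq_zero.1 h2).resolve_left (sub_ne_zero.2 h1)

theorem conj_zpow {ω : ℂ} (hω : ‖ω‖ = 1) (k : ℤ) : (starRingEnd ℂ) (ω ^ k) = ω ^ (-k) := by
  rw [zpow_neg, Complex.inv_def, Complex.normSq_eq_norm_sq, norm_zpow_one hω]; simp

/-- Parseval's identity on `ℤ / p`, with a shift: no wrap-around occurs as the support and the
shift are short compared to `p`. -/
theorem sum_normSq_expSum_mul (p : ℕ) (hp : p ≠ 0) (u v : ℤ) (g : ℤ → ℝ)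
    (hg : ∀ x, g x ≠ 0 → x ∈ Icc u v) (h : ℤ) (hh : |h| + (v - u) < p) :
    ∑ t ∈ range p, (‖expSum (Icc u v) g (root p ^ t)‖ ^ 2 : ℂ) * (root p ^ t) ^ h =
      ((p * ∑ x ∈ Icc u v, g x * g (x + h) : ℝ) : ℂ) := by
  have h1 : ∀ t ∈ range p,
      (‖expSum (Icc u v) g (root p ^ t)‖ ^ 2 : ℂ) * (root p ^ t) ^ h =
        ∑ x ∈ Icc u v, ∑ y ∈ Icc u v, (g x * g y : ℂ) * (root p ^ t) ^ (x - y + h) := by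
    intro t _
    have hω := norm_root_pow p t hp
    have h0 := ne_zero_of_unit hω
    rw [← Complex.mul_conj', expSum, map_sum, sum_mul_sum, sum_mul]
    refine sum_congr rfl fun x _ => ?_
    rw [sum_mul]
    refine sum_congr rfl fun y _ => ?_
    rw [map_mul, conj_zpow hω, Complex.conj_ofReal, zpow_add₀ h0, zpow_sub₀ h0, zpow_neg]
    ring
  rw [sum_congr rfl h1, sum_comm]
  push_cast
  rw [mul_sum]
  refine sum_congr rfl fun x hx => ?_
  rw [sum_comm]
  simp_rw [← mul_sum, sum_root_zpow p hp]
  rw [mem_Icc] at hx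
  have key : ∀ y ∈ Icc u v, ((p : ℤ) ∣ x - y + h ↔ y = x + h) := by
    intro y hy
    rw [mem_Icc] at hy
    constructor
    · intro hd
      have : |x - y + h| < p := by
        refine lt_of_le_of_lt ?_ hh
        have := abs_le.1 (le_refl |h|)
        rw [abs_le]; constructor <;> linarith
      have := Int.eq_zero_of_abs_lt_dvd hd this
      linarith
    · rintro rfl; simp
  have : ∀ y ∈ Icc u v, (g x * g y : ℂ) * (if (p : ℤ) ∣ x - y + h then (p : ℂ) else 0) =
      if y = x + h then (p : ℂ) * (g x * g (x + h)) else 0 := by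
    intro y hy
    simp only [key y hy]
    split_ifs with hyx
    · rw [hyx]; ring
    · simp
  rw [sum_congr rfl this, sum_ite_eq']
  split_ifs with hm
  · rfl
  · have : g (x + h) = 0 := by
      by_contra hne; exact hm (hg _ hne)
    rw [this]; simp

theorem progAvg_support (N : ℕ) (d L : ℕ) (hdL : L * d ≤ N) (g : ℤ → ℝ)
    (hg : ∀ x, g x ≠ 0 → x ∈ Icc 1 (N : ℤ)) (x : ℤ) (hx : progAvg d L g x ≠ 0) :
    x ∈ Icc (1 - (N : ℤ)) N := by
  have h1 : ∑ j ∈ range L, g (x + j * d) ≠ 0 := by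
    intro h; apply hx; rw [progAvg, h, zero_div]
  obtain ⟨j, hj, hjne⟩ := exists_ne_zero_of_sum_ne_zero h1
  have h2 := mem_Icc.1 (hg _ hjne)
  have h3 : j * d ≤ L * d := Nat.mul_le_mul_right d (mem_range.1 hj).le
  have h4 : ((j : ℤ) * d) ≤ N := by exact_mod_cast h3.trans hdL
  have h5 : (0 : ℤ) ≤ j * d := by positivity
  rw [mem_Icc]; constructor <;> linarith

theorem expSum_progAvg (N : ℕ) (d L : ℕ) (hdL : L * d ≤ N) (g : ℤ → ℝ)
    (hg : ∀ x, g x ≠ 0 → x ∈ Icc 1 (N : ℤ)) {ω : ℂ} (hω : ‖ω‖ = 1) :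
    expSum (Icc (1 - (N : ℤ)) N) (progAvg d L g) ω =
      (∑ j ∈ range L, (ω ^ (-(d : ℤ))) ^ j) / L * expSum (Icc (1 - (N : ℤ)) N) g ω := by
  have h0 := ne_zero_of_unit hω
  have e1 : ∀ j ∈ range L, ∑ x ∈ Icc (1 - (N : ℤ)) N, (g (x + j * d) : ℂ) * ω ^ x =
      (ω ^ (-(d : ℤ))) ^ j * expSum (Icc (1 - (N : ℤ)) N) g ω := by
    intro j hj
    have h3 : j * d ≤ L * d := Nat.mul_le_mul_right d (mem_range.1 hj).le
    have h4 : ((j : ℤ) * d) ≤ N := by exact_mod_cast h3.trans hdL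
    have h5 : (0 : ℤ) ≤ j * d := by positivity
    have e2 : expSum (Icc (1 - (N : ℤ)) N) g ω = ∑ y ∈ Icc 1 (N : ℤ), (g y : ℂ) * ω ^ y := by
      rw [expSum]
      refine (sum_subset ?_ ?_).symm
      · exact Icc_subset_Icc (by omega) le_rfl
      · intro x _ hx
        have : g x = 0 := by by_contra hne; exact hx (hg _ hne)
        rw [this]; simp
    rw [e2, mul_sum]
    symm
    refine sum_bij_ne_zero (fun y _ _ => y - j * d) ?_ ?_ ?_ ?_
    · intro y hy _
      rw [mem_Icc] at hy ⊢; constructor <;> linarith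
    · intro y _ _ y' _ _ h; linarith
    · intro x _ hx
      have hx' : g (x + j * d) ≠ 0 := by
        intro h; apply hx; rw [h]; simp
      refine ⟨x + j * d, hg _ hx', ?_, by ring⟩
      have := zpow_ne_zero (x + j * d) h0
      have h' := zpow_ne_zero (-(d : ℤ)) h0
      refine mul_ne_zero (pow_ne_zero _ h') (mul_ne_zero (by exact_mod_cast hx') this)
    · intro y _ _
      rw [sub_add_cancel, ← zpow_natCast, ← zpow_mul, mul_left_comm, ← zpow_add₀ h0]
      congr 2; ring
  rw [div_mul_eq_mul_div, sum_mul, ← sum_congr rfl e1, sum_comm, expSum, sum_div]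
  refine sum_congr rfl fun x _ => ?_
  rw [progAvg]; push_cast
  rw [← sum_mul]; ring

theorem half_le_norm_avg {ζ : ℂ} (hζ : ‖ζ‖ = 1) (L : ℕ) (hL : 1 ≤ L)
    (h : L * ‖ζ - 1‖ ≤ 1 / 2) : 1 / 2 ≤ ‖(∑ j ∈ range L, ζ ^ j) / L‖ := by
  have hL0 : (0 : ℝ) < L := by exact_mod_cast hL
  have h2 : (L : ℂ) = ∑ s ∈ range L, ζ ^ s - ∑ s ∈ range L, (ζ ^ s - 1) := by
    rw [sum_sub_distrib]; simp
  have h3 : ‖∑ s ∈ range L, (ζ ^ s - 1)‖ ≤ L / 2 := by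
    refine (norm_sum_le _ _).trans ?_
    calc ∑ s ∈ range L, ‖ζ ^ s - 1‖ ≤ ∑ s ∈ range L, (1 / 2 : ℝ) := by
          refine sum_le_sum fun s hs => (norm_pow_sub_one_le hζ s).trans (le_trans ?_ h)
          have : s ≤ L := (mem_range.1 hs).le
          gcongr
      _ = L / 2 := by simp; ring
  have h4 : (L : ℝ) ≤ ‖∑ s ∈ range L, ζ ^ s‖ + L / 2 := by
    have : ‖(L : ℂ)‖ = L := by simp
    rw [← this]; nth_rewrite 1 [h2]
    refine (norm_sub_le _ _).trans ?_
    rw [this]; gcongr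
  rw [norm_div, Complex.norm_natCast, le_div_iff₀ hL0]
  linarith

/-- A frequency close to a multiple of `1 / d` survives averaging along step `d`. -/
theorem normSq_expSum_le (N : ℕ) (d L : ℕ) (hL : 1 ≤ L) (hdL : L * d ≤ N) (g : ℤ → ℝ)
    (hg : ∀ x, g x ≠ 0 → x ∈ Icc 1 (N : ℤ)) {ω : ℂ} (hω : ‖ω‖ = 1)
    (h : L * ‖ω ^ d - 1‖ ≤ 1 / 2) :
    ‖expSum (Icc (1 - (N : ℤ)) N) g ω‖ ^ 2 ≤
      4 * ‖expSum (Icc (1 - (N : ℤ)) N) (progAvg d L g) ω‖ ^ 2 := by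
  have h0 := ne_zero_of_unit hω
  rw [expSum_progAvg N d L hdL g hg hω, norm_mul, mul_pow]
  have h1 : ‖ω ^ (-(d : ℤ)) - 1‖ = ‖ω ^ d - 1‖ := by
    have : ω ^ (-(d : ℤ)) - 1 = -(ω ^ (-(d : ℤ)) * (ω ^ d - 1)) := by
      rw [mul_sub, ← zpow_natCast, ← zpow_add₀ h0]; simp
    rw [this, norm_neg, norm_mul, norm_zpow_one hω, one_mul]
  have h2 := half_le_norm_avg (norm_zpow_one hω (-(d : ℤ))) L hL (by rw [h1]; exact h)
  have h3 : (1 / 2 : ℝ) ^ 2 ≤ ‖(∑ j ∈ range L, (ω ^ (-(d : ℤ))) ^ j) / (L : ℂ)‖ ^ 2 := by gcongr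
  have h4 := mul_le_mul_of_nonneg_right h3 (sq_nonneg ‖expSum (Icc (1 - (N : ℤ)) N) g ω‖)
  linarith

/-- The autocorrelations of `f` along the values of the form are controlled by the energies of the
averages of `f` along progressions of small square step. -/
theorem sum_corr_le (a b c : ℤ) (hΔ : b ^ 2 - 4 * a * c ≠ 0)
    (H N M K L : ℕ) (hH : 2 * (|a| + |b| + |c|) ≤ H) (hH1 : 1 ≤ H) (hK : 1 ≤ K)
    (hM : 24 * K ^ 2 ≤ M) (hL : 1 ≤ L) (hLM : L * (24 * K ^ 5) ≤ M ^ 2) (hLN : L * K ^ 2 ≤ N)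
    (f : ℤ → ℝ) (hf : ∀ x, f x ≠ 0 → x ∈ Icc 1 (N : ℤ))
    (hN : ∀ m n : ℤ, m ∈ Icc 1 (M : ℤ) → n ∈ Icc 1 (M : ℤ) →
      |a * m ^ 2 + b * m * n + c * n ^ 2| ≤ N) :
    |∑ m ∈ Icc 1 (M : ℤ), ∑ n ∈ Icc 1 (M : ℤ),
        ∑ x ∈ Icc (1 - (N : ℤ)) N, f x * f (x + (a * m ^ 2 + b * m * n + c * n ^ 2))| ≤
      11 * H * M ^ 2 / K * (∑ x ∈ Icc (1 - (N : ℤ)) N, f x ^ 2 +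
        4 * ∑ k ∈ Icc 1 K, ∑ x ∈ Icc (1 - (N : ℤ)) N, progAvg (k ^ 2) L f x ^ 2) := by
  set W := Icc (1 - (N : ℤ)) N with hW
  set p : ℕ := 4 * N + 1 with hp
  have hp0 : p ≠ 0 := by omega
  have hppos : (0 : ℝ) < p := by positivity
  have hsub : ∀ x, f x ≠ 0 → x ∈ W := fun x hx =>
    Icc_subset_Icc (by omega) le_rfl (hf x hx)
  have hKpos : (0 : ℝ) < K := by exact_mod_cast hK
  have hMpos : (0 : ℝ) < M := by
    have : 0 < M := by nlinarith
    exact_mod_cast this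
  let S : ℂ → ℂ := fun ω =>
    ∑ m ∈ Icc 1 (M : ℤ), ∑ n ∈ Icc 1 (M : ℤ), ω ^ (a * m ^ 2 + b * m * n + c * n ^ 2)
  let R : ℂ → Finset ℕ := fun ω =>
    (Icc 1 K).filter (fun k : ℕ => ‖ω ^ (k ^ 2) - 1‖ ≤ 12 * K ^ 5 / M ^ 2)
  have pars : ∀ g : ℤ → ℝ, (∀ x, g x ≠ 0 → x ∈ W) →
      ∑ t ∈ range p, ‖expSum W g (root p ^ t)‖ ^ 2 = p * ∑ x ∈ W, g x ^ 2 := by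
    intro g hg
    have := sum_normSq_expSum_mul p hp0 (1 - (N : ℤ)) N g hg 0 (by
      rw [hp]; push_cast; simp; linarith)
    simp only [zpow_zero, mul_one, add_zero, ← sq] at this
    rw [← hW] at this
    apply Complex.ofReal_injective
    rw [← this]; push_cast; rfl
  have main : ((p * ∑ m ∈ Icc 1 (M : ℤ), ∑ n ∈ Icc 1 (M : ℤ),
        ∑ x ∈ W, f x * f (x + (a * m ^ 2 + b * m * n + c * n ^ 2)) : ℝ) : ℂ) =
      ∑ t ∈ range p, (‖expSum W f (root p ^ t)‖ ^ 2 : ℂ) * S (root p ^ t) := by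
    have e : ∀ t ∈ range p, (‖expSum W f (root p ^ t)‖ ^ 2 : ℂ) * S (root p ^ t) =
        ∑ m ∈ Icc 1 (M : ℤ), ∑ n ∈ Icc 1 (M : ℤ), (‖expSum W f (root p ^ t)‖ ^ 2 : ℂ) *
          (root p ^ t) ^ (a * m ^ 2 + b * m * n + c * n ^ 2) := by
      intro t _
      simp only [S, mul_sum]
    rw [sum_congr rfl e, mul_sum, Complex.ofReal_sum]
    conv_rhs => rw [sum_comm]
    refine sum_congr rfl fun m hm => ?_
    rw [mul_sum, Complex.ofReal_sum]
    conv_rhs => rw [sum_comm]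
    refine sum_congr rfl fun n hn => ?_
    refine (sum_normSq_expSum_mul p hp0 (1 - (N : ℤ)) N f hsub _ ?_).symm
    have := hN m n hm hn
    rw [hp]; push_cast; linarith
  have bound : ‖∑ t ∈ range p, (‖expSum W f (root p ^ t)‖ ^ 2 : ℂ) * S (root p ^ t)‖ ≤
      11 * H * M ^ 2 / K * (∑ t ∈ range p, ‖expSum W f (root p ^ t)‖ ^ 2 +
        ∑ k ∈ Icc 1 K, ∑ t ∈ range p, 4 * ‖expSum W (progAvg (k ^ 2) L f) (root p ^ t)‖ ^ 2) := by
    rw [sum_comm, ← sum_add_distrib, mul_sum]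
    refine (norm_sum_le _ _).trans (sum_le_sum fun t _ => ?_)
    have hω := norm_root_pow p t hp0
    rw [norm_mul]
    have e1 : ‖(‖expSum W f (root p ^ t)‖ ^ 2 : ℂ)‖ = ‖expSum W f (root p ^ t)‖ ^ 2 := by
      rw [norm_pow, Complex.norm_real, norm_norm]
    rw [e1]
    have e2 : ‖S (root p ^ t)‖ ≤ 11 * H * M ^ 2 / K * (1 + (R (root p ^ t)).card) :=
      weyl_le a b c hΔ hω H M K hH hH1 hK hM
    have e3 : (R (root p ^ t)).card * ‖expSum W f (root p ^ t)‖ ^ 2 ≤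
        ∑ k ∈ Icc 1 K, 4 * ‖expSum W (progAvg (k ^ 2) L f) (root p ^ t)‖ ^ 2 := by
      rw [← nsmul_eq_mul, ← sum_const]
      refine (sum_le_sum fun k hk => ?_).trans
        (sum_le_sum_of_subset_of_nonneg (filter_subset _ _) fun _ _ _ => by positivity)
      obtain ⟨hk1, hk2⟩ := mem_filter.1 hk
      rw [mem_Icc] at hk1
      refine normSq_expSum_le N (k ^ 2) L hL (le_trans ?_ hLN) f hf hω ?_
      · have := hk1.2
        gcongr
      · have h1 : (L : ℝ) * (24 * K ^ 5) ≤ M ^ 2 := by exact_mod_cast hLM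
        calc (L : ℝ) * ‖(root p ^ t) ^ (k ^ 2) - 1‖ ≤ L * (12 * K ^ 5 / M ^ 2) := by gcongr
          _ = L * (24 * K ^ 5) / M ^ 2 / 2 := by ring
          _ ≤ 1 / 2 := by
            gcongr
            rw [div_le_one (by positivity)]; exact h1
    calc _ ≤ ‖expSum W f (root p ^ t)‖ ^ 2 *
          (11 * H * M ^ 2 / K * (1 + (R (root p ^ t)).card)) := by gcongr
      _ = 11 * H * M ^ 2 / K * (‖expSum W f (root p ^ t)‖ ^ 2 +
          (R (root p ^ t)).card * ‖expSum W f (root p ^ t)‖ ^ 2) := by ring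
      _ ≤ _ := by gcongr
  rw [← main, Complex.norm_real, Real.norm_eq_abs, abs_mul, abs_of_pos hppos] at bound
  refine le_of_mul_le_mul_left (bound.trans (le_of_eq ?_)) hppos
  rw [pars f hsub]
  have : ∀ k ∈ Icc 1 K, ∑ t ∈ range p,
      4 * ‖expSum W (progAvg (k ^ 2) L f) (root p ^ t)‖ ^ 2 =
        p * (4 * ∑ x ∈ W, progAvg (k ^ 2) L f x ^ 2) := by
    intro k hk
    rw [mem_Icc] at hk
    rw [← mul_sum, pars]
    · ring
    · refine progAvg_support N (k ^ 2) L (le_trans ?_ hLN) f hf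
      have := hk.2
      gcongr
  rw [sum_congr rfl this, ← mul_sum, ← mul_sum]
  ring

/-! ### Correlations and energy of the balanced function -/

/-- No two distinct elements of `A` differ by a value of the form `a x² + b x y + c y²` at a pair
of positive integers. -/
def FormFree (a b c : ℤ) (A : Finset ℤ) : Prop :=
  ∀ x ∈ A, ∀ y ∈ A, x ≠ y → ∀ m n : ℤ, 0 < m → 0 < n →
    x - y ≠ a * m ^ 2 + b * m * n + c * n ^ 2

/-- The balanced function `1_A - δ 1_{[1, N]}`. -/
noncomputable def balanced (A : Finset ℤ) (N : ℕ) (δ : ℝ) (x : ℤ) : ℝ :=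
  (if x ∈ A then 1 else 0) - δ * (if x ∈ Icc 1 (N : ℤ) then 1 else 0)

theorem sum_ind_eq_card {W S : Finset ℤ} (h : S ⊆ W) :
    ∑ x ∈ W, (if x ∈ S then (1 : ℝ) else 0) = S.card := by
  rw [← sum_filter, sum_const, nsmul_eq_mul, mul_one, filter_mem_eq_inter,
    inter_eq_right.2 h]

theorem card_Icc_one (N : ℕ) : ((Icc 1 (N : ℤ)).card : ℝ) = N := by simp

/-- The pairs `(m, n)` with `h(m, n) = 0` put no constraint on `A`, but there are few of them, even
when the form is reducible. -/
theorem card_zeros_le (a b c : ℤ) (hΔ : b ^ 2 - 4 * a * c ≠ 0) (M m : ℤ) (hm : 0 < m) :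
    ((Icc 1 M).filter (fun n => a * m ^ 2 + b * m * n + c * n ^ 2 = 0)).card ≤ 2 := by
  by_contra hcon
  rw [not_le, two_lt_card] at hcon
  obtain ⟨x, hx, y, hy, z, hz, hxy, hxz, hyz⟩ := hcon
  have hx := (mem_filter.1 hx).2
  have hy := (mem_filter.1 hy).2
  have hz := (mem_filter.1 hz).2
  have e1 : b * m + c * (x + y) = 0 := by
    have : (x - y) * (b * m + c * (x + y)) = 0 := by linear_combination hx - hy
    exact (mul_eq_zero.1 this).resolve_left (sub_ne_zero.2 hxy)
  have e2 : b * m + c * (x + z) = 0 := by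
    have : (x - z) * (b * m + c * (x + z)) = 0 := by linear_combination hx - hz
    exact (mul_eq_zero.1 this).resolve_left (sub_ne_zero.2 hxz)
  have e3 : c = 0 := by
    have : (y - z) * c = 0 := by linear_combination e1 - e2
    exact (mul_eq_zero.1 this).resolve_left (sub_ne_zero.2 hyz)
  have e4 : b = 0 := by
    have : b * m = 0 := by rw [e3] at e1; linarith
    exact (mul_eq_zero.1 this).resolve_right hm.ne'
  apply hΔ; rw [e3, e4]; ring

theorem sum_balanced_sq (A : Finset ℤ) (N : ℕ) (hA : A ⊆ Icc 1 (N : ℤ)) (δ : ℝ)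
    (hδ : (A.card : ℝ) = δ * N) :
    ∑ x ∈ Icc (1 - (N : ℤ)) N, balanced A N δ x ^ 2 ≤ δ * N := by
  have hI : Icc 1 (N : ℤ) ⊆ Icc (1 - (N : ℤ)) N := Icc_subset_Icc (by omega) le_rfl
  have e : ∀ x ∈ Icc (1 - (N : ℤ)) N, balanced A N δ x ^ 2 =
      (1 - 2 * δ) * (if x ∈ A then 1 else 0) + δ ^ 2 * (if x ∈ Icc 1 (N : ℤ) then 1 else 0) := by
    intro x _
    rw [balanced]
    by_cases h1 : x ∈ A
    · have h2 := hA h1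
      rw [if_pos h1, if_pos h2]; ring
    · rw [if_neg h1]
      split_ifs <;> ring
  rw [sum_congr rfl e, sum_add_distrib, ← mul_sum, ← mul_sum, sum_ind_eq_card (hA.trans hI),
    sum_ind_eq_card hI, card_Icc_one, hδ]
  have : (0 : ℝ) ≤ N := by positivity
  nlinarith [mul_nonneg (sq_nonneg δ) this]

/-- Negative correlation at a difference that does not occur in `A`, provided that `A` does not
concentrate near the ends of the interval. -/
theorem sum_balanced_corr (A : Finset ℤ) (N E : ℕ) (hA : A ⊆ Icc 1 (N : ℤ)) (δ : ℝ) (hδ0 : 0 ≤ δ)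
    (hδ : (A.card : ℝ) = δ * N)
    (h1 : 8 * (A ∩ Icc 1 (E : ℤ)).card ≤ A.card)
    (h2 : 8 * (A ∩ Icc ((N : ℤ) - E + 1) N).card ≤ A.card)
    (h : ℤ) (hE : |h| ≤ E) (hfree : ∀ x ∈ A, x + h ∉ A) :
    ∑ x ∈ Icc (1 - (N : ℤ)) N, balanced A N δ x * balanced A N δ (x + h) ≤ -(δ ^ 2 * N / 2) := by
  have hI : Icc 1 (N : ℤ) ⊆ Icc (1 - (N : ℤ)) N := Icc_subset_Icc (by omega) le_rfl
  set Md := A ∩ Icc ((E : ℤ) + 1) (N - E) with hMd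
  have hh := abs_le.1 hE
  have hMdA : ∀ x, x ∈ Md → x ∈ A := fun x hx => (mem_inter.1 hx).1
  have hMdI : ∀ x, x ∈ Md → E + 1 ≤ x ∧ x ≤ N - E := fun x hx =>
    mem_Icc.1 (mem_inter.1 hx).2
  have hcard : A.card ≤ (A ∩ Icc 1 (E : ℤ)).card + (A ∩ Icc ((N : ℤ) - E + 1) N).card +
      Md.card := by
    have : A ⊆ (A ∩ Icc 1 (E : ℤ)) ∪ (A ∩ Icc ((N : ℤ) - E + 1) N) ∪ Md := by
      intro x hx
      have := mem_Icc.1 (hA hx)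
      simp only [hMd, mem_union, mem_inter, mem_Icc, hx, true_and]
      omega
    exact (card_le_card this).trans ((card_union_le _ _).trans
      (Nat.add_le_add_right (card_union_le _ _) _))
  have hMdcard : 3 / 4 * (δ * N) ≤ (Md.card : ℝ) := by
    have : 3 * A.card ≤ 4 * Md.card := by omega
    have : (3 : ℝ) * A.card ≤ 4 * Md.card := by exact_mod_cast this
    rw [hδ] at this; linarith
  have e : ∀ x ∈ Icc (1 - (N : ℤ)) N, balanced A N δ x * balanced A N δ (x + h) ≤
      δ ^ 2 * (if x ∈ Icc 1 (N : ℤ) then 1 else 0) - δ * (if x ∈ Md then 1 else 0) -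
        δ * (if x + h ∈ Md then 1 else 0) := by
    intro x _
    have f1 : (if x ∈ A then (1 : ℝ) else 0) * (if x + h ∈ A then 1 else 0) = 0 := by
      by_cases hx : x ∈ A
      · rw [if_neg (hfree x hx), mul_zero]
      · rw [if_neg hx, zero_mul]
    have f2 : (if x ∈ Md then (1 : ℝ) else 0) ≤
        (if x ∈ A then 1 else 0) * (if x + h ∈ Icc 1 (N : ℤ) then 1 else 0) := by
      by_cases hx : x ∈ Md
      · have := hMdI x hx
        rw [if_pos hx, if_pos (hMdA x hx), if_pos]
        · norm_num
        · rw [mem_Icc]; constructor <;> linarith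
      · rw [if_neg hx]; positivity
    have f3 : (if x + h ∈ Md then (1 : ℝ) else 0) ≤
        (if x ∈ Icc 1 (N : ℤ) then 1 else 0) * (if x + h ∈ A then 1 else 0) := by
      by_cases hx : x + h ∈ Md
      · have := hMdI _ hx
        rw [if_pos hx, if_pos (hMdA _ hx), if_pos]
        · norm_num
        · rw [mem_Icc]; constructor <;> linarith
      · rw [if_neg hx]; positivity
    have f4 : (if x ∈ Icc 1 (N : ℤ) then (1 : ℝ) else 0) *
        (if x + h ∈ Icc 1 (N : ℤ) then 1 else 0) ≤ (if x ∈ Icc 1 (N : ℤ) then 1 else 0) := by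
      split_ifs <;> norm_num
    have g2 := mul_le_mul_of_nonneg_left f2 hδ0
    have g3 := mul_le_mul_of_nonneg_left f3 hδ0
    have g4 := mul_le_mul_of_nonneg_left f4 (sq_nonneg δ)
    rw [balanced, balanced]
    linear_combination f1 + g2 + g3 + g4
  refine (sum_le_sum e).trans ?_
  have s1 : ∑ x ∈ Icc (1 - (N : ℤ)) N, (if x ∈ Md then (1 : ℝ) else 0) = Md.card :=
    sum_ind_eq_card (fun x hx => hI (hA (hMdA x hx)))
  have s2 : ∑ x ∈ Icc (1 - (N : ℤ)) N, (if x + h ∈ Md then (1 : ℝ) else 0) = Md.card := by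
    rw [← sum_filter, sum_const, nsmul_eq_mul, mul_one]
    congr 1
    refine card_nbij' (fun x => x + h) (fun y => y - h) ?_ ?_ ?_ ?_
    · intro x hx; exact (mem_filter.1 hx).2
    · intro y hy
      have := hMdI y hy
      simp only [coe_filter, Set.mem_ofPred_eq, mem_Icc, sub_add_cancel]
      exact ⟨⟨by linarith, by linarith⟩, hy⟩
    · intro x _; simp
    · intro x _; simp
  rw [sum_sub_distrib, sum_sub_distrib, ← mul_sum, ← mul_sum, ← mul_sum, s1, s2,
    sum_ind_eq_card hI, card_Icc_one]
  nlinarith [mul_le_mul_of_nonneg_left hMdcard hδ0]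

theorem sum_progAvg (N : ℕ) (d L : ℕ) (hL : 1 ≤ L) (hdL : L * d ≤ N) (g : ℤ → ℝ)
    (hg : ∀ x, g x ≠ 0 → x ∈ Icc 1 (N : ℤ)) :
    ∑ x ∈ Icc (1 - (N : ℤ)) N, progAvg d L g x = ∑ x ∈ Icc (1 - (N : ℤ)) N, g x := by
  have hL0 : (L : ℂ) ≠ 0 := by exact_mod_cast (by omega : L ≠ 0)
  have h := expSum_progAvg N d L hdL g hg (ω := 1) (by simp)
  simp only [expSum, one_zpow, mul_one, one_pow, sum_const, card_range, nsmul_eq_mul] at h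
  rw [div_self hL0, one_mul] at h
  exact_mod_cast h

theorem progAvg_le (d L : ℕ) (hL : 1 ≤ L) (g : ℤ → ℝ) (C : ℝ) (hg : ∀ x, g x ≤ C) (x : ℤ) :
    progAvg d L g x ≤ C := by
  have hL0 : (0 : ℝ) < L := by exact_mod_cast hL
  rw [progAvg, div_le_iff₀ hL0]
  refine (sum_le_sum fun j _ => hg _).trans ?_
  simp [mul_comm]

theorem le_progAvg (d L : ℕ) (hL : 1 ≤ L) (g : ℤ → ℝ) (C : ℝ) (hg : ∀ x, C ≤ g x) (x : ℤ) :
    C ≤ progAvg d L g x := by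
  have hL0 : (0 : ℝ) < L := by exact_mod_cast hL
  rw [progAvg, le_div_iff₀ hL0]
  refine le_trans ?_ (sum_le_sum fun j _ => hg _)
  simp [mul_comm]

theorem progAvg_balanced (A : Finset ℤ) (N d L : ℕ) (δ : ℝ) (x : ℤ) :
    progAvg d L (balanced A N δ) x = progAvg d L (fun y => if y ∈ A then 1 else 0) x -
      δ * progAvg d L (fun y => if y ∈ Icc 1 (N : ℤ) then 1 else 0) x := by
  simp only [progAvg, balanced]
  rw [sum_sub_distrib, ← mul_sum]; ring

/-- If `A` has at most `(1 + κ)` times its average density on every progression of step `d` and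
length `L` in `[1, N]`, then its balanced function has little energy along such progressions. -/
theorem energy_le (A : Finset ℤ) (N d L : ℕ) (hA : A ⊆ Icc 1 (N : ℤ)) (δ κ : ℝ)
    (hδ0 : 0 ≤ δ) (hδ1 : δ ≤ 1) (hκ0 : 0 ≤ κ) (hκ1 : κ ≤ 1) (hδ : (A.card : ℝ) = δ * N)
    (hL : 1 ≤ L) (hdL : L * d ≤ N)
    (hinc : ∀ x : ℤ, 1 ≤ x → x ≤ N - L * d →
      progAvg d L (fun y => if y ∈ A then 1 else 0) x ≤ (1 + κ) * δ) :
    ∑ x ∈ Icc (1 - (N : ℤ)) N, progAvg d L (balanced A N δ) x ^ 2 ≤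
      κ * δ ^ 2 * N + 4 * (L * d) := by
  have hL0 : (0 : ℝ) < L := by exact_mod_cast hL
  have hI : Icc 1 (N : ℤ) ⊆ Icc (1 - (N : ℤ)) N := Icc_subset_Icc (by omega) le_rfl
  have hdLz : (L : ℤ) * d ≤ N := by exact_mod_cast hdL
  have hLd0 : (0 : ℤ) ≤ L * d := by positivity
  set iA : ℤ → ℝ := fun y => if y ∈ A then 1 else 0 with hiA
  set iI : ℤ → ℝ := fun y => if y ∈ Icc 1 (N : ℤ) then 1 else 0 with hiI
  set g := progAvg d L iA with hg
  set u := progAvg d L iI with hu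
  have hAI : ∀ y, 0 ≤ iA y ∧ iA y ≤ 1 := by
    intro y; simp only [hiA]; split_ifs <;> norm_num
  have hII : ∀ y, 0 ≤ iI y ∧ iI y ≤ 1 := by
    intro y; simp only [hiI]; split_ifs <;> norm_num
  have g0 : ∀ x, 0 ≤ g x := le_progAvg d L hL iA 0 fun y => (hAI y).1
  have g1 : ∀ x, g x ≤ 1 := progAvg_le d L hL iA 1 fun y => (hAI y).2
  have u0 : ∀ x, 0 ≤ u x := le_progAvg d L hL iI 0 fun y => (hII y).1
  have u1 : ∀ x, u x ≤ 1 := progAvg_le d L hL iI 1 fun y => (hII y).2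
  set J := Icc 1 ((N : ℤ) - L * d) with hJ
  set B1 := Icc (1 - (L * d : ℤ)) 0 with hB1
  set B2 := Icc ((N : ℤ) - L * d + 1) N with hB2
  -- In the interior `u = 1` and `(g - δ)² = g² - 2 δ g + δ² ≤ δ² - (1 - κ) δ g`; each starting point
  -- of a progression crossing an end of `[1, N]` costs at most `2`.
  have e : ∀ x ∈ Icc (1 - (N : ℤ)) N, progAvg d L (balanced A N δ) x ^ 2 ≤
      δ ^ 2 * (if x ∈ J then 1 else 0) - (1 - κ) * δ * g x +
        (2 * (if x ∈ B1 then 1 else 0) + 2 * (if x ∈ B2 then 1 else 0)) := by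
    intro x hxW
    rw [progAvg_balanced]
    change (g x - δ * u x) ^ 2 ≤ _
    have hg0 := g0 x
    have hg1 := g1 x
    have hu0 := u0 x
    have hu1 := u1 x
    have hb1 : (0 : ℝ) ≤ if x ∈ B1 then 1 else 0 := by positivity
    have hb2 : (0 : ℝ) ≤ if x ∈ B2 then 1 else 0 := by positivity
    by_cases hx : x ∈ J
    · rw [if_pos hx]
      rw [hJ, mem_Icc] at hx
      have hux : u x = 1 := by
        rw [hu, progAvg, div_eq_one_iff_eq hL0.ne']
        have : ∀ j ∈ range L, iI (x + j * d) = 1 := by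
          intro j hj
          have h3 : j * d ≤ L * d := Nat.mul_le_mul_right d (mem_range.1 hj).le
          have h4 : ((j : ℤ) * d) ≤ L * d := by exact_mod_cast h3
          have h5 : (0 : ℤ) ≤ j * d := by positivity
          simp only [hiI]
          rw [if_pos]
          rw [mem_Icc]; constructor <;> linarith
        rw [sum_congr rfl this]; simp
      have hinc' : g x ≤ (1 + κ) * δ := hinc x hx.1 hx.2
      rw [hux]
      nlinarith
    · rw [if_neg hx]
      by_cases hB : x ∈ B1 ∨ x ∈ B2
      · have hb : 2 ≤ 2 * (if x ∈ B1 then (1 : ℝ) else 0) + 2 * (if x ∈ B2 then 1 else 0) := by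
          rcases hB with hB | hB <;> rw [if_pos hB] <;> linarith
        have hle : (g x - δ * u x) ^ 2 ≤ 1 := by
          have : 0 ≤ δ * u x := by positivity
          have : δ * u x ≤ 1 := by nlinarith
          rw [sq_le_one_iff_abs_le_one, abs_le]; constructor <;> linarith
        have hle2 : (1 - κ) * δ * g x ≤ 1 := by
          have h1 : (1 - κ) * δ ≤ 1 := by nlinarith
          have h2 : 0 ≤ (1 - κ) * δ := mul_nonneg (by linarith) hδ0
          nlinarith
        linarith
      · have hout : ∀ j ∈ range L, x + j * d ∉ Icc 1 (N : ℤ) := by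
          intro j hj hmem
          have h3 : (j + 1) * d ≤ L * d := Nat.mul_le_mul_right d (mem_range.1 hj)
          have h4 : ((j : ℤ) * d) ≤ L * d := by
            have : ((j : ℤ) + 1) * d ≤ L * d := by exact_mod_cast h3
            have : (0 : ℤ) ≤ d := by positivity
            linarith
          have h5 : (0 : ℤ) ≤ j * d := by positivity
          rw [mem_Icc] at hmem
          simp only [hJ, hB1, hB2, mem_Icc, not_or] at hx hB
          omega
        have hux : u x = 0 := by
          rw [hu, progAvg, sum_eq_zero, zero_div]
          intro j hj
          simp only [hiI]; rw [if_neg (hout j hj)]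
        have hgx : g x = 0 := by
          rw [hg, progAvg, sum_eq_zero, zero_div]
          intro j hj
          simp only [hiA]; rw [if_neg (fun h => hout j hj (hA h))]
        rw [hux, hgx]
        linarith
  refine (sum_le_sum e).trans ?_
  have hgsum : ∑ x ∈ Icc (1 - (N : ℤ)) N, g x = δ * N := by
    rw [hg, sum_progAvg N d L hL hdL iA, hiA, sum_ind_eq_card (hA.trans hI), hδ]
    intro x hx
    apply hA
    by_contra hne
    apply hx; simp only [hiA]; rw [if_neg hne]
  have c1 : (B1.card : ℝ) = L * d := by
    have : B1.card = L * d := by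
      rw [hB1, Int.card_Icc]; zify
      rw [Int.toNat_of_nonneg (by linarith)]; ring
    exact_mod_cast this
  have c2 : (B2.card : ℝ) = L * d := by
    have : B2.card = L * d := by
      rw [hB2, Int.card_Icc]; zify
      rw [Int.toNat_of_nonneg (by linarith)]; ring
    exact_mod_cast this
  have cJ : (J.card : ℝ) ≤ N := by
    rw [← card_Icc_one N]
    have : J ⊆ Icc 1 (N : ℤ) := Icc_subset_Icc le_rfl (by linarith)
    exact_mod_cast card_le_card this
  rw [sum_add_distrib, sum_sub_distrib, sum_add_distrib, ← mul_sum, ← mul_sum, ← mul_sum,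
    ← mul_sum, hgsum, sum_ind_eq_card, sum_ind_eq_card, sum_ind_eq_card, c1, c2]
  · have := mul_le_mul_of_nonneg_left cJ (sq_nonneg δ)
    nlinarith
  · exact Icc_subset_Icc (by linarith) le_rfl
  · exact Icc_subset_Icc (by linarith) (by omega)
  · exact Icc_subset_Icc (by omega) (by linarith)

/-- Homogeneity of the form: the property of avoiding its values passes to the trace of `A` on a
progression of square step, after rescaling. -/
theorem FormFree.progression {a b c : ℤ} {A : Finset ℤ} (hA : FormFree a b c A) (x₀ : ℤ) (k : ℕ)
    (hk : 1 ≤ k) (I : Finset ℤ) :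
    FormFree a b c (I.filter (fun j => x₀ + j * k ^ 2 ∈ A)) := by
  intro x hx y hy hxy m n hm hn heq
  have hk0 : (0 : ℤ) < k := by exact_mod_cast hk
  refine hA _ (mem_filter.1 hx).2 _ (mem_filter.1 hy).2 ?_ (k * m) (k * n) (by positivity)
    (by positivity) ?_
  · intro h
    apply hxy
    have : (x - y) * (k : ℤ) ^ 2 = 0 := by linear_combination h
    have := (mul_eq_zero.1 this).resolve_right (by positivity)
    linarith
  · linear_combination (k : ℤ) ^ 2 * heq

/-- If `A` avoids the values of the form and is not concentrated near an end of `[1, N]`, its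
balanced function has large energy along the progressions of some small square step. -/
theorem exists_large_energy (a b c : ℤ) (hΔ : b ^ 2 - 4 * a * c ≠ 0)
    (H N M K L : ℕ) (hH : 2 * (|a| + |b| + |c|) ≤ H) (hH1 : 1 ≤ H) (hK : 1 ≤ K)
    (hM : 24 * K ^ 2 ≤ M) (hL : 1 ≤ L) (hLM : L * (24 * K ^ 5) ≤ M ^ 2) (hLN : L * K ^ 2 ≤ N)
    (A : Finset ℤ) (hA : A ⊆ Icc 1 (N : ℤ)) (hfree : FormFree a b c A) (δ : ℝ)
    (hδ0 : 0 < δ) (hδ1 : δ ≤ 1) (hδ : (A.card : ℝ) = δ * N) (E : ℕ) (hEN : E ≤ N)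
    (hN : ∀ m n : ℤ, m ∈ Icc 1 (M : ℤ) → n ∈ Icc 1 (M : ℤ) →
      |a * m ^ 2 + b * m * n + c * n ^ 2| ≤ E)
    (h1 : 8 * (A ∩ Icc 1 (E : ℤ)).card ≤ A.card)
    (h2 : 8 * (A ∩ Icc ((N : ℤ) - E + 1) N).card ≤ A.card)
    (hMδ : 16 ≤ M * δ) (hKδ : 88 * H ≤ K * δ) (hN0 : 1 ≤ N) :
    ∃ k ∈ Icc 1 K, δ ^ 2 * N / (400 * H) <
      ∑ x ∈ Icc (1 - (N : ℤ)) N, progAvg (k ^ 2) L (balanced A N δ) x ^ 2 := by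
  by_contra! hcon
  have hKpos : (0 : ℝ) < K := by exact_mod_cast hK
  have hHpos : (0 : ℝ) < H := by exact_mod_cast hH1
  have hNpos : (0 : ℝ) < N := by exact_mod_cast hN0
  have hMpos : (0 : ℝ) < M := by
    have : 0 < M := by nlinarith
    exact_mod_cast this
  have key := sum_corr_le a b c hΔ H N M K L hH hH1 hK hM hL hLM hLN (balanced A N δ) (by
    intro x hx
    by_contra hne
    apply hx
    rw [balanced, if_neg (fun h => hne (hA h)), if_neg hne]; ring) (by
    intro m n hm hn
    exact (hN m n hm hn).trans (by exact_mod_cast hEN))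
  set W := Icc (1 - (N : ℤ)) N with hW
  have hR0 := sum_balanced_sq A N hA δ hδ
  rw [← hW] at hR0
  have hE : ∑ k ∈ Icc 1 K, ∑ x ∈ W, progAvg (k ^ 2) L (balanced A N δ) x ^ 2 ≤
      K * (δ ^ 2 * N / (400 * H)) := by
    refine (sum_le_sum hcon).trans ?_
    simp
  -- upper bound for the sum of the correlations, pairs with `h(m, n) = 0` being few
  have hrow : ∀ m ∈ Icc 1 (M : ℤ), ∑ n ∈ Icc 1 (M : ℤ), ∑ x ∈ W,
      balanced A N δ x * balanced A N δ (x + (a * m ^ 2 + b * m * n + c * n ^ 2)) ≤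
        -(M * (δ ^ 2 * N / 2)) + 4 * (δ * N) := by
    intro m hm
    have hm0 : 0 < m := by have := mem_Icc.1 hm; linarith
    have hn : ∀ n ∈ Icc 1 (M : ℤ), ∑ x ∈ W,
        balanced A N δ x * balanced A N δ (x + (a * m ^ 2 + b * m * n + c * n ^ 2)) ≤
        -(δ ^ 2 * N / 2) + if a * m ^ 2 + b * m * n + c * n ^ 2 = 0 then 2 * (δ * N) else 0 := by
      intro n hn
      have hn0 : 0 < n := by have := mem_Icc.1 hn; linarith
      split_ifs with hz
      · rw [hz]
        simp only [add_zero, ← sq]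
        have : δ ^ 2 * N ≤ δ * N := by nlinarith
        have : 0 < δ * N := by positivity
        linarith
      · rw [add_zero]
        refine sum_balanced_corr A N E hA δ hδ0.le hδ h1 h2 _ (hN m n hm hn) ?_
        intro x hx hx'
        refine hfree _ hx' x hx ?_ m n hm0 hn0 (by ring)
        intro h; apply hz; linarith
    refine (sum_le_sum hn).trans ?_
    rw [sum_add_distrib, ← sum_filter, sum_const, sum_const, nsmul_eq_mul, nsmul_eq_mul,
      card_Icc_one]
    have hz := card_zeros_le a b c hΔ M m hm0
    have hz' : (((Icc 1 (M : ℤ)).filter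
      (fun n => a * m ^ 2 + b * m * n + c * n ^ 2 = 0)).card : ℝ) ≤ 2 := by exact_mod_cast hz
    have : 0 < δ * N := by positivity
    nlinarith
  have hsum := sum_le_sum hrow
  rw [sum_const, nsmul_eq_mul, card_Icc_one] at hsum
  have hlow := (abs_le.1 key).1
  have hδN : 0 < δ * N := by positivity
  have t1 : (M : ℝ) * (4 * (δ * N)) ≤ M ^ 2 * (δ ^ 2 * N / 4) := by
    have := mul_le_mul_of_nonneg_right hMδ (by positivity : 0 ≤ (M : ℝ) * (δ * N))
    nlinarith
  have t2 : 11 * H * M ^ 2 / K * (∑ x ∈ W, balanced A N δ x ^ 2 +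
        4 * ∑ k ∈ Icc 1 K, ∑ x ∈ W, progAvg (k ^ 2) L (balanced A N δ) x ^ 2) ≤
      11 * H * M ^ 2 / K * (K * δ / (88 * H) * (δ * N) + 4 * (K * (δ ^ 2 * N / (400 * H)))) := by
    gcongr
    refine hR0.trans (le_mul_of_one_le_left hδN.le ?_)
    rw [one_le_div (by positivity)]; exact hKδ
  have t3 : 11 * H * M ^ 2 / K * (K * δ / (88 * H) * (δ * N) +
      4 * (K * (δ ^ 2 * N / (400 * H)))) = M ^ 2 * (δ ^ 2 * N) * (1 / 8 + 11 / 100) := by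
    field_simp; norm_num
  have t4 : 0 < (M : ℝ) ^ 2 * (δ ^ 2 * N) := by positivity
  nlinarith

/-! ### Density increment and iteration -/

/-- The boundary terms in the energy bound are negligible for progressions of total length
`P ≤ N / (24 K³)`. -/
theorem boundary_small {H K δ P N : ℝ} (hH : 1 ≤ H) (hK : 1 ≤ K) (hP : 0 ≤ P)
    (hKδ : 88 * H ≤ K * δ) (hPN : P * (24 * K ^ 3) ≤ N) :
    4 * P ≤ δ ^ 2 * N / (800 * H) := by
  have hH0 : 0 < H := by linarith
  have e1 : (88 * H) ^ 2 ≤ (K * δ) ^ 2 := by gcongr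
  have e2 : (88 * H) ^ 2 * 1 ≤ (K * δ) ^ 2 * K := by gcongr
  have e3 : H ≤ H ^ 2 := by nlinarith
  have h5 : 3200 * H ≤ δ ^ 2 * (24 * K ^ 3) := by
    have : δ ^ 2 * (24 * K ^ 3) = 24 * ((K * δ) ^ 2 * K) := by ring
    rw [this]; linarith
  rw [le_div_iff₀ (by positivity)]
  have e4 := mul_le_mul_of_nonneg_left hPN (sq_nonneg δ)
  have e5 := mul_le_mul_of_nonneg_left h5 hP
  linarith

set_option maxHeartbeats 1000000 in
/-- Density increment, with the parameter `K` (a large multiple of the inverse density) explicit: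
a set avoiding the values of the form is denser by a constant factor on a progression of square
step, of length at least `N` divided by a power of `K`. -/
theorem exists_increment_aux (a b c : ℤ) (hΔ : b ^ 2 - 4 * a * c ≠ 0)
    (H N K : ℕ) (hH : 2 * (|a| + |b| + |c|) ≤ H) (hH1 : 1 ≤ H) (hK : 1 ≤ K)
    (hNK : 23040 * H * K ^ 6 ≤ N) (A : Finset ℤ) (hA : A ⊆ Icc 1 (N : ℤ))
    (hfree : FormFree a b c A) (δ : ℝ) (hδ0 : 0 < δ) (hδ1 : δ ≤ 1) (hδ : (A.card : ℝ) = δ * N)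
    (hKδ : 88 * H ≤ K * δ) :
    ∃ (N' : ℕ) (A' : Finset ℤ), 1 ≤ N' ∧ N' < N ∧ N ≤ 1920 * H * K ^ 5 * N' ∧
      A' ⊆ Icc 1 (N' : ℤ) ∧ FormFree a b c A' ∧ (1 + 1 / (800 * H)) * δ * N' ≤ A'.card := by
  have hHr : (1 : ℝ) ≤ H := by exact_mod_cast hH1
  have hKr : (1 : ℝ) ≤ K := by exact_mod_cast hK
  have hK5 : 1 ≤ K ^ 5 := Nat.one_le_pow _ _ hK
  have hK6 : 1 ≤ K ^ 6 := Nat.one_le_pow _ _ hK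
  have hHK5 : 1 ≤ H * K ^ 5 := Nat.mul_pos hH1 hK5
  have hHK6 : 1 ≤ H * K ^ 6 := Nat.mul_pos hH1 hK6
  have hN23 : 23040 ≤ N := by
    refine le_trans ?_ hNK
    rw [mul_assoc]; omega
  have hNpos : (0 : ℝ) < N := by
    have : 0 < N := by omega
    exact_mod_cast this
  obtain ⟨E, hE⟩ : ∃ E : ℕ, E = N / 10 := ⟨_, rfl⟩
  have hE1 : 1 ≤ E := by omega
  have hEN : E < N := by omega
  have h19 : N ≤ 1920 * H * K ^ 5 * E := by
    have : N ≤ 1920 * E := by omega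
    calc N ≤ 1920 * E := this
      _ ≤ 1920 * E * (H * K ^ 5) := Nat.le_mul_of_pos_right _ hHK5
      _ = _ := by ring
  have hκ1 : (1 : ℝ) / (800 * H) ≤ 1 / 800 := by
    apply one_div_le_one_div_of_le <;> linarith
  have hκ0 : (0 : ℝ) ≤ 1 / (800 * H) := by positivity
  have hE10 : 10 * (E : ℝ) ≤ N := by
    have : 10 * E ≤ N := by omega
    exact_mod_cast this
  have hEinc : (1 + 1 / (800 * H)) * δ * E ≤ δ * N / 8 := by
    have : (1 + 1 / (800 * (H : ℝ))) * δ * E ≤ (1 + 1 / 800) * δ * E := by gcongr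
    nlinarith [mul_le_mul_of_nonneg_left hE10 hδ0.le]
  -- concentration of `A` near an endpoint is already a density increment
  by_cases h1 : 8 * (A ∩ Icc 1 (E : ℤ)).card ≤ A.card
  swap
  · refine ⟨E, A ∩ Icc 1 (E : ℤ), hE1, hEN, h19, inter_subset_right, ?_, ?_⟩
    · intro x hx y hy
      exact hfree x (mem_inter.1 hx).1 y (mem_inter.1 hy).1
    · have : (A.card : ℝ) ≤ 8 * (A ∩ Icc 1 (E : ℤ)).card := by
        exact_mod_cast (not_le.1 h1).le
      rw [hδ] at this
      linarith
  by_cases h2 : 8 * (A ∩ Icc ((N : ℤ) - E + 1) N).card ≤ A.card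
  swap
  · refine ⟨E, (A ∩ Icc ((N : ℤ) - E + 1) N).image (fun x => x - (N - E)), hE1, hEN, h19, ?_, ?_,
      ?_⟩
    · intro y hy
      obtain ⟨x, hx, rfl⟩ := mem_image.1 hy
      have := mem_Icc.1 (mem_inter.1 hx).2
      rw [mem_Icc]; constructor <;> linarith
    · intro x' hx' y' hy' hxy m n hm hn heq
      obtain ⟨x, hx, rfl⟩ := mem_image.1 hx'
      obtain ⟨y, hy, rfl⟩ := mem_image.1 hy'
      refine hfree x (mem_inter.1 hx).1 y (mem_inter.1 hy).1 ?_ m n hm hn (by linarith)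
      rintro rfl; exact hxy rfl
    · rw [card_image_of_injective _ (fun x y h => by simpa using h)]
      have : (A.card : ℝ) ≤ 8 * (A ∩ Icc ((N : ℤ) - E + 1) N).card := by
        exact_mod_cast (not_le.1 h2).le
      rw [hδ] at this
      linarith
  -- scales: `|h(m, n)| ≤ N / 10` for `m, n ≤ M`, and `L` is the length of the progressions
  obtain ⟨M, hMdef⟩ : ∃ M : ℕ, M = Nat.sqrt (N / (10 * H)) := ⟨_, rfl⟩
  have hM1 : 10 * H * M ^ 2 ≤ N := by
    have h3 : M ^ 2 ≤ N / (10 * H) := hMdef ▸ Nat.sqrt_le' _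
    calc 10 * H * M ^ 2 ≤ 10 * H * (N / (10 * H)) := Nat.mul_le_mul_left _ h3
      _ ≤ N := Nat.mul_div_le _ _
  have hM2 : N < 10 * H * (M + 1) ^ 2 := by
    have h3 : N / (10 * H) < (M + 1) ^ 2 := hMdef ▸ Nat.lt_succ_sqrt' _
    rw [Nat.div_lt_iff_lt_mul (by omega)] at h3
    linarith
  have hM3 : 24 * K ^ 3 ≤ M := by
    by_contra hcon
    have h3 : M + 1 ≤ 24 * K ^ 3 := by omega
    have h4 : (M + 1) ^ 2 ≤ (24 * K ^ 3) ^ 2 := Nat.pow_le_pow_left h3 2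
    have h5 : 10 * H * (M + 1) ^ 2 ≤ 10 * H * (24 * K ^ 3) ^ 2 := Nat.mul_le_mul_left _ h4
    have h6 : 10 * H * (24 * K ^ 3) ^ 2 = 5760 * (H * K ^ 6) := by ring
    have h7 : 23040 * H * K ^ 6 = 23040 * (H * K ^ 6) := by ring
    omega
  have hK3 : 1 ≤ K ^ 3 := Nat.one_le_pow _ _ hK
  have hM4 : N ≤ 40 * H * M ^ 2 := by
    have h3 : (M + 1) ^ 2 ≤ (2 * M) ^ 2 := Nat.pow_le_pow_left (by omega) 2
    have h4 : 10 * H * (M + 1) ^ 2 ≤ 10 * H * (2 * M) ^ 2 := Nat.mul_le_mul_left _ h3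
    have h5 : 10 * H * (2 * M) ^ 2 = 40 * H * M ^ 2 := by ring
    omega
  have hMK2 : 24 * K ^ 2 ≤ M := by
    refine le_trans ?_ hM3
    have := Nat.pow_le_pow_right hK (by norm_num : 2 ≤ 3)
    omega
  have hMK5 : 24 * K ^ 5 ≤ M ^ 2 := by
    have h3 : (24 * K ^ 3) ^ 2 ≤ M ^ 2 := Nat.pow_le_pow_left hM3 2
    have h4 : (24 * K ^ 3) ^ 2 = 576 * K ^ 6 := by ring
    have := Nat.pow_le_pow_right hK (by norm_num : 5 ≤ 6)
    omega
  have hMN : M ^ 2 ≤ N := by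
    refine le_trans ?_ hM1
    exact Nat.le_mul_of_pos_left _ (by omega)
  obtain ⟨L, hLdef⟩ : ∃ L : ℕ, L = M ^ 2 / (24 * K ^ 5) := ⟨_, rfl⟩
  have hL1 : 1 ≤ L := hLdef ▸ Nat.div_pos hMK5 (by omega)
  have hLM : L * (24 * K ^ 5) ≤ M ^ 2 := hLdef ▸ Nat.div_mul_le_self _ _
  have hLM2 : M ^ 2 ≤ 48 * K ^ 5 * L := by
    have h3 : M ^ 2 < 24 * K ^ 5 * (L + 1) := hLdef ▸ Nat.lt_mul_div_succ _ (by omega)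
    have h4 : 24 * K ^ 5 * (L + 1) ≤ 24 * K ^ 5 * (2 * L) := Nat.mul_le_mul_left _ (by omega)
    have h5 : 24 * K ^ 5 * (2 * L) = 48 * K ^ 5 * L := by ring
    omega
  have hLK2 : L * K ^ 2 * (24 * K ^ 3) ≤ N := by
    have : L * K ^ 2 * (24 * K ^ 3) = L * (24 * K ^ 5) := by ring
    omega
  have hLN : L * K ^ 2 ≤ N := by
    refine le_trans ?_ hLK2
    exact Nat.le_mul_of_pos_right _ (by omega)
  have hLlt : L < N := by
    have h3 : L * 24 ≤ L * (24 * K ^ 5) := Nat.mul_le_mul_left _ (by omega)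
    omega
  have hlen : N ≤ 1920 * H * K ^ 5 * L := by
    calc N ≤ 40 * H * M ^ 2 := hM4
      _ ≤ 40 * H * (48 * K ^ 5 * L) := Nat.mul_le_mul_left _ hLM2
      _ = _ := by ring
  have hform : ∀ m n : ℤ, m ∈ Icc 1 (M : ℤ) → n ∈ Icc 1 (M : ℤ) →
      |a * m ^ 2 + b * m * n + c * n ^ 2| ≤ E := by
    intro m n hm hn
    rw [mem_Icc] at hm hn
    have hm' : |m| ≤ M := abs_le.2 ⟨by linarith, hm.2⟩
    have hn' : |n| ≤ M := abs_le.2 ⟨by linarith, hn.2⟩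
    have ha : |a * m ^ 2| ≤ |a| * (M : ℤ) ^ 2 := by rw [abs_mul, abs_pow]; gcongr
    have hb : |b * m * n| ≤ |b| * (M : ℤ) ^ 2 := by
      rw [abs_mul, abs_mul, sq, mul_assoc]; gcongr
    have hc : |c * n ^ 2| ≤ |c| * (M : ℤ) ^ 2 := by rw [abs_mul, abs_pow]; gcongr
    have h3 := (abs_add_le (a * m ^ 2 + b * m * n) (c * n ^ 2)).trans
      (add_le_add_left (abs_add_le (a * m ^ 2) (b * m * n)) _)
    have h4 : (2 * (|a| + |b| + |c|)) * (M : ℤ) ^ 2 ≤ H * (M : ℤ) ^ 2 := by gcongr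
    have h5 : 10 * ((H : ℤ) * (M : ℤ) ^ 2) ≤ N := by
      have : 10 * H * M ^ 2 = 10 * (H * M ^ 2) := by ring
      rw [this] at hM1
      exact_mod_cast hM1
    have h6 : (E : ℤ) = N / 10 := by rw [hE]; push_cast; rfl
    have h7 : 10 * |a * m ^ 2 + b * m * n + c * n ^ 2| ≤ N := by
      have : (0 : ℤ) ≤ H * (M : ℤ) ^ 2 := by positivity
      linarith
    rw [h6, Int.le_ediv_iff_mul_le (by norm_num)]; linarith
  have hMδ : 16 ≤ M * δ := by
    have h3 : K ≤ M := by
      have : K ≤ K ^ 3 := Nat.le_self_pow (by norm_num) K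
      omega
    have h4 : (K : ℝ) * δ ≤ M * δ := by gcongr
    linarith
  obtain ⟨k, hk, hbig⟩ := exists_large_energy a b c hΔ H N M K L hH hH1 hK hMK2 hL1 hLM hLN A hA
    hfree δ hδ0 hδ1 hδ E hEN.le hform h1 h2 hMδ hKδ (by omega)
  rw [mem_Icc] at hk
  have hkK : k ^ 2 ≤ K ^ 2 := Nat.pow_le_pow_left hk.2 2
  have hLk : L * k ^ 2 ≤ L * K ^ 2 := Nat.mul_le_mul_left _ hkK
  have hex : ∃ x : ℤ, (1 + 1 / (800 * H)) * δ <
      progAvg (k ^ 2) L (fun y => if y ∈ A then 1 else 0) x := by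
    by_contra! hcon
    have h3 := energy_le A N (k ^ 2) L hA δ (1 / (800 * H)) hδ0.le hδ1 hκ0 (by linarith) hδ hL1
      (hLk.trans hLN) (fun x _ _ => hcon x)
    -- the boundary term is negligible: `L k² ≤ N / (24 K³)` and `K δ ≥ 88 H`
    have h4 : ((L : ℝ) * (k ^ 2 : ℕ)) * (24 * K ^ 3) ≤ N := by
      have : L * k ^ 2 * (24 * K ^ 3) ≤ N := (Nat.mul_le_mul_right _ hLk).trans hLK2
      exact_mod_cast this
    have h6 := boundary_small hHr hKr (by positivity) hKδ h4
    have h7 : δ ^ 2 * N / (400 * H) = 1 / (800 * H) * δ ^ 2 * N + δ ^ 2 * N / (800 * H) := by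
      field_simp; norm_num
    linarith
  obtain ⟨x, hx⟩ := hex
  refine ⟨L, (Icc 1 (L : ℤ)).filter (fun j => (x - k ^ 2) + j * k ^ 2 ∈ A), hL1, hLlt, hlen,
    filter_subset _ _, hfree.progression _ k hk.1 _, ?_⟩
  have hLpos : (0 : ℝ) < L := by exact_mod_cast hL1
  rw [progAvg, lt_div_iff₀ hLpos, ← sum_filter, sum_const, nsmul_eq_mul, mul_one] at hx
  refine hx.le.trans ?_
  norm_cast
  refine card_le_card_of_injOn (fun j : ℕ => (j : ℤ) + 1) ?_ ?_
  · intro j hj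
    simp only [coe_filter, Set.mem_ofPred_eq, mem_range, mem_Icc] at hj ⊢
    refine ⟨⟨by omega, by omega⟩, ?_⟩
    have : x - ((k ^ 2 : ℕ) : ℤ) + ((j : ℤ) + 1) * ((k ^ 2 : ℕ) : ℤ) =
        x + ((j * k ^ 2 : ℕ) : ℤ) := by
      push_cast; ring
    rw [this]; exact hj.2
  · intro i _ j _ h
    simpa using h

/-- Density increment: the inverse density of `A` is `N / |A|`, and `Q`, `κ` depend only on the
form. -/
theorem exists_increment (a b c : ℤ) (hΔ : b ^ 2 - 4 * a * c ≠ 0) :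
    ∃ Q κ : ℝ, 3 ≤ Q ∧ 0 < κ ∧ ∀ (N : ℕ) (A : Finset ℤ), A ⊆ Icc 1 (N : ℤ) → A.Nonempty →
      FormFree a b c A → (Q * N / A.card) ^ 6 ≤ N →
      ∃ (N' : ℕ) (A' : Finset ℤ), N' < N ∧ A' ⊆ Icc 1 (N' : ℤ) ∧ A'.Nonempty ∧
        FormFree a b c A' ∧ (N : ℝ) ≤ (Q * N / A.card) ^ 6 * N' ∧
        (1 + κ) * (Q * N' / A'.card) ≤ Q * N / A.card := by
  obtain ⟨H, hHdef⟩ : ∃ H : ℕ, H = 2 * (a.natAbs + b.natAbs + c.natAbs) + 1 := ⟨_, rfl⟩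
  have hH1 : 1 ≤ H := by omega
  have hH : 2 * (|a| + |b| + |c|) ≤ (H : ℤ) := by
    rw [hHdef]; push_cast; linarith
  have hHr : (1 : ℝ) ≤ H := by exact_mod_cast hH1
  refine ⟨23040 * H * (89 * H), 1 / (800 * H), by nlinarith, by positivity, ?_⟩
  intro N A hA hne hfree hbig
  have hcard : 0 < A.card := hne.card_pos
  have hcr : (0 : ℝ) < A.card := by exact_mod_cast hcard
  have hle : A.card ≤ N := by
    have := card_le_card hA
    simpa using this
  have hN : (0 : ℝ) < N := by exact_mod_cast hcard.trans_le hle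
  have hler : (A.card : ℝ) ≤ N := by exact_mod_cast hle
  obtain ⟨δ, hδdef⟩ : ∃ δ : ℝ, δ = A.card / N := ⟨_, rfl⟩
  have hδ0 : 0 < δ := by rw [hδdef]; positivity
  have hδ1 : δ ≤ 1 := by rw [hδdef, div_le_one hN]; exact hler
  have hδ : (A.card : ℝ) = δ * N := by rw [hδdef]; field_simp
  obtain ⟨K, hKdef⟩ : ∃ K : ℕ, K = ⌈88 * H / δ⌉₊ := ⟨_, rfl⟩
  have hK1 : 88 * H / δ ≤ (K : ℝ) := hKdef ▸ Nat.le_ceil _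
  have hKδ : 88 * H ≤ K * δ := by rwa [div_le_iff₀ hδ0] at hK1
  have hHδ : 1 ≤ H / δ := by rw [le_div_iff₀ hδ0]; linarith
  have hK2 : (K : ℝ) ≤ 89 * H / δ := by
    have h1 : (K : ℝ) < 88 * H / δ + 1 := hKdef ▸ Nat.ceil_lt_add_one (by positivity)
    have h2 : 89 * H / δ = 88 * H / δ + H / δ := by ring
    linarith
  have hKpos : 1 ≤ K := by
    have : (0 : ℝ) < K := lt_of_lt_of_le (by positivity) hK1
    exact_mod_cast this
  have hKr : (1 : ℝ) ≤ K := by exact_mod_cast hKpos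
  have hq : 23040 * H * (89 * H) * N / A.card = 23040 * H * (89 * H / δ) := by
    rw [hδdef, div_div_eq_mul_div]; ring
  rw [hq] at hbig ⊢
  obtain ⟨P, hP⟩ : ∃ P : ℝ, P = 23040 * H * (89 * H / δ) := ⟨_, rfl⟩
  rw [← hP] at hbig ⊢
  have h1 : 23040 * H * (K : ℝ) ≤ P := by rw [hP]; gcongr
  have hpow : ∀ r : ℝ, 1 ≤ r → r ≤ r ^ 6 := fun r hr => le_self_pow₀ hr (by norm_num)
  have h23 : (1 : ℝ) ≤ 23040 * H := by linarith
  have hP6 : 23040 * H * (K : ℝ) ^ 6 ≤ P ^ 6 := by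
    calc 23040 * H * (K : ℝ) ^ 6 ≤ (23040 * H) ^ 6 * (K : ℝ) ^ 6 := by
          gcongr; exact hpow _ h23
      _ = (23040 * H * (K : ℝ)) ^ 6 := by ring
      _ ≤ P ^ 6 := by gcongr
  obtain ⟨N', A', hN'1, hN'N, hlen, hA', hfree', hdens⟩ := exists_increment_aux a b c hΔ H N K hH
    hH1 hKpos (by
      have := hP6.trans hbig
      exact_mod_cast this) A hA hfree δ hδ0 hδ1 hδ hKδ
  have hN'r : (0 : ℝ) < N' := by exact_mod_cast hN'1
  have hA'pos : (0 : ℝ) < A'.card := lt_of_lt_of_le (by positivity) hdens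
  refine ⟨N', A', hN'N, hA', ?_, hfree', ?_, ?_⟩
  · rw [← card_pos]; exact_mod_cast hA'pos
  · have h2 : (N : ℝ) ≤ 1920 * H * K ^ 5 * N' := by exact_mod_cast hlen
    refine h2.trans ?_
    have h3 : 1920 * H * (K : ℝ) ^ 5 ≤ P ^ 6 := by
      refine le_trans ?_ hP6
      have : (K : ℝ) ^ 5 ≤ K ^ 6 := pow_le_pow_right₀ hKr (by norm_num)
      calc 1920 * H * (K : ℝ) ^ 5 ≤ 23040 * H * (K : ℝ) ^ 5 := by gcongr; norm_num
        _ ≤ _ := by gcongr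
    gcongr
  · have h4 : P = 23040 * H * (89 * H) / δ := by rw [hP]; ring
    rw [h4, ← mul_div_assoc, div_le_div_iff₀ hA'pos hδ0]
    have := mul_le_mul_of_nonneg_left hdens (by positivity : (0 : ℝ) ≤ 23040 * H * (89 * H))
    linarith

/-- Iterating the density increment: `log N` is at most quadratic in the logarithm of the inverse
density. -/
theorem log_le_of_formFree (a b c : ℤ) (hΔ : b ^ 2 - 4 * a * c ≠ 0) :
    ∃ Q B : ℝ, 3 ≤ Q ∧ 0 < B ∧ ∀ (N : ℕ) (A : Finset ℤ), A ⊆ Icc 1 (N : ℤ) → A.Nonempty →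
      FormFree a b c A → Real.log N ≤ B * Real.log (Q * N / A.card) ^ 2 := by
  obtain ⟨Q, κ, hQ, hκ, hinc⟩ := exists_increment a b c hΔ
  set lam := Real.log (1 + κ) with hlam
  have hlam0 : 0 < lam := Real.log_pos (by linarith)
  refine ⟨Q, 6 + 6 / lam, hQ, by positivity, ?_⟩
  have hbasic : ∀ (N : ℕ) (A : Finset ℤ), A ⊆ Icc 1 (N : ℤ) → A.Nonempty →
      (0 : ℝ) < N ∧ (0 : ℝ) < A.card ∧ 1 ≤ Real.log (Q * N / A.card) := by
    intro N A hA hne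
    have hcard : 0 < A.card := hne.card_pos
    have hcr : (0 : ℝ) < A.card := by exact_mod_cast hcard
    have hle : A.card ≤ N := by
      have := card_le_card hA
      simpa using this
    have hler : (A.card : ℝ) ≤ N := by exact_mod_cast hle
    have h3 : 3 ≤ Q * N / A.card := by
      rw [le_div_iff₀ hcr]; nlinarith
    refine ⟨by linarith, hcr, ?_⟩
    rw [Real.le_log_iff_exp_le (by linarith)]
    have := Real.exp_one_lt_d9
    linarith
  intro N
  induction N using Nat.strong_induction_on with
  | _ N ih =>
    intro A hA hne hfree
    obtain ⟨hN, hcr, hl⟩ := hbasic N A hA hne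
    have hQN : 0 < Q * N / A.card := by positivity
    set l := Real.log (Q * N / A.card) with hldef
    have hB : 0 < 6 / lam := by positivity
    have hl2 : l ≤ l ^ 2 := by nlinarith
    rcases lt_or_ge (N : ℝ) ((Q * N / A.card) ^ 6) with hsmall | hbig
    · have h1 : Real.log N ≤ 6 * l := by
        have := Real.log_le_log hN hsmall.le
        rw [Real.log_pow] at this
        exact_mod_cast this
      nlinarith [mul_pos hB (by positivity : 0 < l ^ 2)]
    · obtain ⟨N', A', hlt, hA', hne', hfree', hlen, hdens⟩ := hinc N A hA hne hfree hbig
      obtain ⟨hN', hcr', hl'⟩ := hbasic N' A' hA' hne'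
      have hQN' : 0 < Q * N' / A'.card := by positivity
      have hih := ih N' hlt A' hA' hne' hfree'
      set l' := Real.log (Q * N' / A'.card) with hl'def
      have h1 : lam + l' ≤ l := by
        have := Real.log_le_log (by positivity) hdens
        rwa [Real.log_mul (by linarith) hQN'.ne'] at this
      have h2 : Real.log N ≤ 6 * l + Real.log N' := by
        have := Real.log_le_log hN hlen
        rw [Real.log_mul (by positivity) hN'.ne', Real.log_pow] at this
        exact_mod_cast this
      -- the square of the logarithm drops by at least `lam l`, which pays for `6 l`
      have h3 : l' ^ 2 ≤ l ^ 2 - lam * l := by nlinarith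
      have h4 : (6 + 6 / lam) * l' ^ 2 ≤ (6 + 6 / lam) * (l ^ 2 - lam * l) := by gcongr
      have h5 : (6 + 6 / lam) * (l ^ 2 - lam * l) = (6 + 6 / lam) * l ^ 2 - 6 * lam * l - 6 * l := by
        field_simp; ring
      have h6 : 0 < lam * l := by positivity
      linarith

end BinQuad

theorem binary_quadratic_forms_in_difference_sets (a b c : ℤ)
    (hΔ : b ^ 2 - 4 * a * c ≠ 0) :
    ∃ C cst : ℝ, 0 < C ∧ 0 < cst ∧
      ∀ (N : ℕ) (A : Finset ℤ), A ⊆ Finset.Icc 1 (N : ℤ) →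
        (∀ x ∈ A, ∀ y ∈ A, x ≠ y → ∀ m n : ℤ, 0 < m → 0 < n →
          x - y ≠ a * m ^ 2 + b * m * n + c * n ^ 2) →
        (A.card : ℝ) ≤ C * N * Real.exp (-cst * Real.sqrt (Real.log N)) := by
  obtain ⟨Q, B, hQ, hB, hlog⟩ := BinQuad.log_le_of_formFree a b c hΔ
  refine ⟨Q, 1 / Real.sqrt B, by linarith, by positivity, ?_⟩
  intro N A hA hfree
  rcases A.eq_empty_or_nonempty with rfl | hne
  · simp; positivity
  have h1 := hlog N A hA hne hfree
  have hcr : (0 : ℝ) < A.card := by exact_mod_cast hne.card_pos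
  have hler : (A.card : ℝ) ≤ N := by
    have := card_le_card hA
    have : A.card ≤ N := by simpa using this
    exact_mod_cast this
  have hN : (0 : ℝ) < N := hcr.trans_le hler
  have hQN : 0 < Q * N / A.card := by positivity
  have hl0 : 0 ≤ Real.log (Q * N / A.card) := by
    apply Real.log_nonneg
    rw [le_div_iff₀ hcr]; nlinarith
  set l := Real.log (Q * N / A.card) with hl
  have h2 : Real.sqrt (Real.log N) ≤ Real.sqrt B * l := by
    refine (Real.sqrt_le_sqrt h1).trans (le_of_eq ?_)
    rw [Real.sqrt_mul hB.le, Real.sqrt_sq hl0]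
  have h3 : -l ≤ -(1 / Real.sqrt B) * Real.sqrt (Real.log N) := by
    have hs : 0 < Real.sqrt B := Real.sqrt_pos.2 hB
    have : Real.sqrt (Real.log N) / Real.sqrt B ≤ l := by
      rw [div_le_iff₀ hs]; linarith
    have e : -(1 / Real.sqrt B) * Real.sqrt (Real.log N) =
        -(Real.sqrt (Real.log N) / Real.sqrt B) := by ring
    rw [e]; linarith
  have h4 : (A.card : ℝ) = Q * N * Real.exp (-l) := by
    rw [Real.exp_neg, hl, Real.exp_log hQN]
    have : Q ≠ 0 := by linarith
    field_simp
  rw [h4]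
  have h5 := Real.exp_le_exp.2 h3
  have h6 : 0 ≤ Q * N := by positivity
  exact mul_le_mul_of_nonneg_left h5 h6
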